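/- Let s > −1/2. There exist δ ∈ (0,1) and C > 0 such that for all u, v ∈ 𝒮(ℝ×ℝ²), ‖(∂_x + ∂_y)(uv)‖_{X̃^{s,−1/2,1}} ≤ C ‖u‖_{X̃^{s,(1−δ)/2,1}} ‖v‖_{X̃^{s,(1−δ)/2,1}}. -/

import Mathlib

/-!
The estimate is proved on the Fourier side. Write `ζ = ξ + η`, `ω = ξ - η`, `σ = τ - ξ³ - η³` and
`Λ = 1 + ζ² + |σ|`; then `ξ³ + η³ = (ζ³ + 3 ζ ω²) / 4`.

**Reduction to weighted `L²` norms.** On a dyadic piece `⟨M⟩` and `⟨M² + L⟩` are comparable with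
`⟨ζ⟩` and `Λ`. The cutoffs overlap boundedly, so the norm of an input dominates the `L²` norm with
weight `⟨ζ⟩^s Λ^{(1-ε)/2}` (`le_Xtnorm_in`). Cauchy–Schwarz in `L` against the summable weights
`2^{-ε|l|/2}` bounds the output norm by the `L²` norm whose squared weight is
`⟨ζ⟩^{2s} Λ^{-1} (|σ|^{-ε} + |σ|^ε)` (`Xtnorm_out_le`). Since the transform of `(∂_x + ∂_y)(uv)` is
at most `|ζ|` times the convolution `|û| * |v̂|` (`ftt_derivProd_le`), what remains is a bilinear
`L²` bound for a nonnegative kernel.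

**Schur test.** For frequencies `a + b + c = 0` the squared kernel is split into three parts, in each
of which one of the three frequencies is frozen and the square of the kernel is integrated over the
other two (`schur_main`). It is enough that these integrals are bounded uniformly.

**Resonance.** One has `Σ σ = -(3/4) (ζ_a ζ_b ζ_c + Σ ζ ω²)`. Let `Z` and `m` be the sizes of the
largest and the smallest of the `ζ`'s. Either some `Λ` is at least a multiple of `m Z²`, or one of
the differences `ζ_b ω_b - ζ_c ω_c`, belonging to a frozen variable `a` with `|ζ_a|` comparable
with `Z`, is at least a multiple of `(m Z³)^{1/2}` (`cover`): if two such differences are small,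
then `Σ ζ ω²` is too small to cancel `ζ_a ζ_b ζ_c` (`resonance_lower`). In either case the squared
kernel is at most a constant times a majorant `maj` (`kernel_le`).

**Integrating the majorant.** With `a` frozen, the modulation of a free variable is integrated with
the kernel `kf`, the variable `ω` with a bound for powers of a quadratic polynomial
(`lintegral_quadratic`), where a large difference keeps `ω` away from the critical point, and
finally `ζ` over `|ζ| ≤ 2 |ζ_a|`. With `r = max (-s) 0` the outcome is bounded when
`2r - 2 + 14ε ≤ -1` (`maj_lintegral`), which for small `ε > 0` is the condition `s > -1/2`.
-/

noncomputable section

open MeasureTheory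
open scoped ENNReal

/-- Space-time Fourier transform `ũ(τ,ξ,η)` of a function `u(t,x,y)`. -/
def ftt (w : ℝ → ℝ → ℝ → ℂ) (τ ξ η : ℝ) : ℂ :=
  ∫ t : ℝ, ∫ x : ℝ, ∫ y : ℝ,
    Complex.exp (-Complex.I * ((t * τ + x * ξ + y * η : ℝ) : ℂ)) * w t x y

/-- `φ(t) = χ(t) - χ(2t)`. -/
def phiCut (χ : ℝ → ℝ) (t : ℝ) : ℝ := χ t - χ (2 * t)

/-- `φ_N(t) = φ(t/N)`. -/
def phiCutD (χ : ℝ → ℝ) (N t : ℝ) : ℝ := phiCut χ (t / N)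

/-- Japanese bracket `⟨x⟩ = (1+x²)^{1/2}` raised to the power `s`. -/
def jbr (x s : ℝ) : ℝ := (1 + x ^ 2) ^ (s / 2)

/-- The `L²_{t,x,y}` norm of the dyadic piece `P_{N,M} Q_L u`, computed on the
Fourier side via Plancherel's theorem: the multiplier is
`φ_N(|(ξ,η)|) φ_M(ξ+η) φ_L(τ-ξ³-η³)`. -/
def PQLnorm (χ : ℝ → ℝ) (N M L : ℝ) (w : ℝ → ℝ → ℝ → ℂ) : ℝ≥0∞ :=
  (∫⁻ v : ℝ × ℝ × ℝ,
      ENNReal.ofReal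
        ((phiCutD χ N (Real.sqrt (v.2.1 ^ 2 + v.2.2 ^ 2)) *
            phiCutD χ M (v.2.1 + v.2.2) *
            phiCutD χ L (v.1 - v.2.1 ^ 3 - v.2.2 ^ 3)) ^ 2 *
          ‖ftt w v.1 v.2.1 v.2.2‖ ^ 2)) ^ ((1 : ℝ) / 2)

/-- The Besov-type Bourgain norm
`‖u‖_{X̃^{s,b,1}} = { Σ_N Σ_M ( Σ_L ⟨M⟩^s ⟨M²+L⟩^b ‖P_{N,M}Q_L u‖_{L²} )² }^{1/2}`,
all sums over dyadic numbers `N = 2ⁿ`, `M = 2ᵐ`, `L = 2ˡ`, `n, m, l ∈ ℤ`. -/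
def Xtnorm (χ : ℝ → ℝ) (s b : ℝ) (w : ℝ → ℝ → ℝ → ℂ) : ℝ≥0∞ :=
  (∑' n : ℤ, ∑' m : ℤ,
      (∑' l : ℤ,
          ENNReal.ofReal (jbr ((2 : ℝ) ^ m) s * jbr (((2 : ℝ) ^ m) ^ 2 + (2 : ℝ) ^ l) b) *
            PQLnorm χ ((2 : ℝ) ^ n) ((2 : ℝ) ^ m) ((2 : ℝ) ^ l) w) ^ 2) ^ ((1 : ℝ) / 2)

/-- `(∂_x + ∂_y)(u v)` as a pointwise function of `(t,x,y)`. -/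
def dxdyProd (u v : ℝ → ℝ → ℝ → ℂ) : ℝ → ℝ → ℝ → ℂ := fun t x y =>
  deriv (fun x' => u t x' y * v t x' y) x + deriv (fun y' => u t x y' * v t x y') y

/-! ### Fourier transforms of products -/

/-- The Euclidean model of space-time, on which the Fourier transform of the library lives. -/
abbrev Esp := WithLp 2 (ℝ × WithLp 2 (ℝ × ℝ))

/-- The identification of the Euclidean model with `ℝ × ℝ × ℝ`. -/
def eV : Esp ≃L[ℝ] ℝ × ℝ × ℝ :=
  (WithLp.prodContinuousLinearEquiv 2 ℝ ℝ (WithLp 2 (ℝ × ℝ))).trans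
    ((ContinuousLinearEquiv.refl ℝ ℝ).prodCongr (WithLp.prodContinuousLinearEquiv 2 ℝ ℝ ℝ))

lemma eV_mp : MeasurePreserving eV volume volume := by
  have h1 : MeasurePreserving (@WithLp.ofLp 2 (ℝ × WithLp 2 (ℝ × ℝ))) volume volume :=
    WithLp.volume_preserving_ofLp ℝ (WithLp 2 (ℝ × ℝ))
  have h2 : MeasurePreserving (@WithLp.ofLp 2 (ℝ × ℝ)) volume volume :=
    WithLp.volume_preserving_ofLp ℝ ℝ
  have h3 := (MeasurePreserving.id (volume : Measure ℝ)).prod h2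
  exact h3.comp h1

instance volume_isAddHaar : (volume : Measure (ℝ × ℝ × ℝ)).IsAddHaarMeasure :=
  have : (volume : Measure (ℝ × ℝ)).IsAddHaarMeasure :=
    Measure.prod.instIsAddHaarMeasure volume volume
  Measure.prod.instIsAddHaarMeasure volume volume

lemma eV_emb : MeasurableEmbedding eV :=
  eV.toHomeomorph.measurableEmbedding

lemma inner_eV (a b : Esp) :
    inner ℝ a b = (eV a).1 * (eV b).1 + (eV a).2.1 * (eV b).2.1 + (eV a).2.2 * (eV b).2.2 := by
  simp [eV, WithLp.prod_inner_apply]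
  ring

open FourierTransform SchwartzMap in
/-- The transform `ftt` of a Schwartz function is the library's Fourier transform, with the
frequency rescaled by `2π`. -/
lemma ftt_eq (u : SchwartzMap (ℝ × ℝ × ℝ) ℂ) (v : ℝ × ℝ × ℝ) :
    ftt (fun t x y => u (t, x, y)) v.1 v.2.1 v.2.2 =
      𝓕 (compCLMOfContinuousLinearEquiv ℂ eV u) ((2 * Real.pi)⁻¹ • eV.symm v) := by
  rw [fourier_coe, Real.fourier_eq']
  have hint : Integrable (fun p : ℝ × ℝ × ℝ =>
      Complex.exp (-Complex.I * ((p.1 * v.1 + p.2.1 * v.2.1 + p.2.2 * v.2.2 : ℝ) : ℂ)) * u p) := by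
    have hu : Integrable (fun p => u p) (volume : Measure (ℝ × ℝ × ℝ)) := by
      rw [← eV_mp.integrable_comp_emb eV_emb]
      exact (compCLMOfContinuousLinearEquiv ℂ eV u).integrable
    refine hu.norm.mono' ?_ (Filter.Eventually.of_forall fun p => ?_)
    · exact ((by fun_prop : Continuous fun p : ℝ × ℝ × ℝ =>
        Complex.exp (-Complex.I * ((p.1 * v.1 + p.2.1 * v.2.1 + p.2.2 * v.2.2 : ℝ) : ℂ)))
        |>.mul u.continuous).aestronglyMeasurable
    · rw [norm_mul, Complex.norm_exp]
      simp
  have h1 : ∫ p : ℝ × ℝ × ℝ,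
      Complex.exp (-Complex.I * ((p.1 * v.1 + p.2.1 * v.2.1 + p.2.2 * v.2.2 : ℝ) : ℂ)) * u p =
      ftt (fun t x y => u (t, x, y)) v.1 v.2.1 v.2.2 := by
    unfold ftt
    have e1 := integral_prod (μ := (volume : Measure ℝ))
      (ν := (volume : Measure (ℝ × ℝ))) _ hint
    refine e1.trans ?_
    refine integral_congr_ae ?_
    filter_upwards [Integrable.prod_right_ae (μ := (volume : Measure ℝ))
      (ν := (volume : Measure (ℝ × ℝ))) hint] with t ht
    exact integral_prod (μ := (volume : Measure ℝ)) (ν := (volume : Measure ℝ)) _ ht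
  rw [← h1, ← eV_mp.integral_comp eV_emb]
  refine integral_congr_ae (Filter.Eventually.of_forall fun a => ?_)
  simp only [compCLMOfContinuousLinearEquiv_apply, Function.comp, smul_eq_mul]
  congr 2
  rw [inner_smul_right, inner_eV]
  simp only [ContinuousLinearEquiv.apply_symm_apply]
  have : (Real.pi : ℂ) ≠ 0 := by exact_mod_cast Real.pi_ne_zero
  push_cast
  field_simp

lemma ftt_continuous (u : SchwartzMap (ℝ × ℝ × ℝ) ℂ) :
    Continuous fun v : ℝ × ℝ × ℝ => ftt (fun t x y => u (t, x, y)) v.1 v.2.1 v.2.2 := by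
  simp_rw [ftt_eq]
  exact (SchwartzMap.continuous _).comp (by fun_prop)

open FourierTransform SchwartzMap in
/-- The Fourier transform turns products of Schwartz functions into convolutions. Both sides have
the same Fourier transform, namely the reflection of the product. -/
lemma fourier_mul_schwartz (f g : SchwartzMap Esp ℂ) :
    𝓕 (pairing (ContinuousLinearMap.mul ℂ ℂ) f g) =
      SchwartzMap.convolution (ContinuousLinearMap.mul ℂ ℂ) (𝓕 f) (𝓕 g) := by
  have key : ∀ h : SchwartzMap Esp ℂ, ∀ x, 𝓕 (𝓕 h) x = h (-x) := by
    intro h x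
    have h1 : 𝓕⁻ (𝓕 h) (-x) = h (-x) := by rw [fourierInv_fourier_eq]
    rw [← h1, fourierInv_coe, fourier_coe (𝓕 h), Real.fourierInv_eq_fourier_neg, neg_neg]
  have : 𝓕 (𝓕 (pairing (ContinuousLinearMap.mul ℂ ℂ) f g)) =
      𝓕 (SchwartzMap.convolution (ContinuousLinearMap.mul ℂ ℂ) (𝓕 f) (𝓕 g)) := by
    rw [fourier_convolution]
    ext x
    rw [key, pairing_apply_apply, pairing_apply_apply, key, key]
  have h2 := congrArg (fun h => 𝓕⁻ h) this
  simpa using h2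

open FourierTransform SchwartzMap LineDeriv in
/-- `(∂_x + ∂_y)(uv)` as a Schwartz function. -/
def derivProd (u v : SchwartzMap (ℝ × ℝ × ℝ) ℂ) : SchwartzMap (ℝ × ℝ × ℝ) ℂ :=
  ∂_{((0, 1, 1) : ℝ × ℝ × ℝ)} (pairing (ContinuousLinearMap.mul ℂ ℂ) u v)

open FourierTransform SchwartzMap LineDeriv in
lemma dxdyProd_eq (u v : SchwartzMap (ℝ × ℝ × ℝ) ℂ) :
    dxdyProd (fun t x y => u (t, x, y)) (fun t x y => v (t, x, y)) =
      fun t x y => derivProd u v (t, x, y) := by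
  funext t x y
  set P := pairing (ContinuousLinearMap.mul ℂ ℂ) u v with hP
  have hPa : ∀ p, P p = u p * v p := fun p => by rw [hP, pairing_apply_apply]; simp
  have hd := P.hasFDerivAt (t, x, y)
  have hx : HasDerivAt (fun x' => u (t, x', y) * v (t, x', y)) (fderiv ℝ P (t, x, y) (0, 1, 0)) x := by
    have hc : HasDerivAt (fun x' : ℝ => ((t, x', y) : ℝ × ℝ × ℝ)) (0, 1, 0) x :=
      (hasDerivAt_const x t).prodMk ((hasDerivAt_id x).prodMk (hasDerivAt_const x y))
    have := hd.comp_hasDerivAt x hc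
    refine this.congr_of_eventuallyEq (Filter.Eventually.of_forall fun x' => ?_)
    simp [hPa]
  have hy : HasDerivAt (fun y' => u (t, x, y') * v (t, x, y')) (fderiv ℝ P (t, x, y) (0, 0, 1)) y := by
    have hc : HasDerivAt (fun y' : ℝ => ((t, x, y') : ℝ × ℝ × ℝ)) (0, 0, 1) y :=
      (hasDerivAt_const y t).prodMk ((hasDerivAt_const y x).prodMk (hasDerivAt_id y))
    have := hd.comp_hasDerivAt y hc
    refine this.congr_of_eventuallyEq (Filter.Eventually.of_forall fun x' => ?_)
    simp [hPa]
  unfold dxdyProd derivProd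
  rw [hx.deriv, hy.deriv, lineDerivOp_apply_eq_fderiv, ← map_add, ← hP]
  simp

open FourierTransform SchwartzMap LineDeriv in
/-- The Fourier transform of `(∂_x + ∂_y)(uv)` is dominated by `|ξ + η|` times the convolution of
the moduli of the Fourier transforms. -/
lemma ftt_derivProd_le (u v : SchwartzMap (ℝ × ℝ × ℝ) ℂ) (k : ℝ × ℝ × ℝ) :
    ‖ftt (fun t x y => derivProd u v (t, x, y)) k.1 k.2.1 k.2.2‖ₑ ≤
      ENNReal.ofReal |k.2.1 + k.2.2| * ∫⁻ w : ℝ × ℝ × ℝ,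
        ‖ftt (fun t x y => u (t, x, y)) w.1 w.2.1 w.2.2‖ₑ *
        ‖ftt (fun t x y => v (t, x, y)) (k - w).1 (k - w).2.1 (k - w).2.2‖ₑ := by
  simp_rw [ftt_eq]
  set U := compCLMOfContinuousLinearEquiv ℂ eV u with hU
  set V := compCLMOfContinuousLinearEquiv ℂ eV v with hV
  have h1 : compCLMOfContinuousLinearEquiv ℂ eV (derivProd u v) =
      ∂_{eV.symm (0, 1, 1)} (pairing (ContinuousLinearMap.mul ℂ ℂ) U V) := by
    have : pairing (ContinuousLinearMap.mul ℂ ℂ) U V =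
        compCLMOfContinuousLinearEquiv ℂ eV (pairing (ContinuousLinearMap.mul ℂ ℂ) u v) := by
      ext x
      simp [hU, hV, pairing_apply_apply]
    rw [this, lineDerivOp_compCLMOfContinuousLinearEquiv]
    simp [derivProd]
  have htg : (fun x : Esp => inner ℝ x (eV.symm (0, 1, 1))).HasTemperateGrowth :=
    ((innerSL ℝ).flip (eV.symm (0, 1, 1))).hasTemperateGrowth
  rw [h1, fourier_lineDerivOp_eq, smul_apply, smulLeftCLM_apply_apply htg, fourier_mul_schwartz,
    convolution_apply]
  set q : Esp := (2 * Real.pi)⁻¹ • eV.symm k with hq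
  have hpi : (0 : ℝ) < 2 * Real.pi := by positivity
  have hin : inner ℝ q (eV.symm (0, 1, 1)) = (2 * Real.pi)⁻¹ * (k.2.1 + k.2.2) := by
    rw [inner_eV, hq]
    simp
    ring
  rw [hin]
  rw [enorm_smul, enorm_smul, ← mul_assoc]
  have h2 : ‖(2 * Real.pi * Complex.I : ℂ)‖ₑ * ‖(2 * Real.pi)⁻¹ * (k.2.1 + k.2.2)‖ₑ =
      ENNReal.ofReal |k.2.1 + k.2.2| := by
    rw [← ofReal_norm, ← ofReal_norm, ← ENNReal.ofReal_mul (norm_nonneg _)]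
    congr 1
    simp [abs_of_pos Real.pi_pos]
    field_simp
  rw [h2]
  gcongr
  set H : ℝ × ℝ × ℝ → ℝ≥0∞ := fun p => ‖𝓕 U (eV.symm p)‖ₑ * ‖𝓕 V (q - eV.symm p)‖ₑ with hH
  have h3 : ‖MeasureTheory.convolution (fun x => (𝓕 U : SchwartzMap Esp ℂ) x)
      (fun x => (𝓕 V : SchwartzMap Esp ℂ) x) (ContinuousLinearMap.mul ℂ ℂ) volume q‖ₑ ≤
      ∫⁻ p, H p := by
    refine (enorm_integral_le_lintegral_enorm _).trans ?_
    rw [← eV_mp.lintegral_comp_emb eV_emb]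
    refine lintegral_mono fun x => le_of_eq ?_
    simp only [hH, ContinuousLinearEquiv.symm_apply_apply, ContinuousLinearMap.mul_apply', enorm_mul]
  refine h3.trans ?_
  have hHm : Measurable H := by
    rw [hH]
    exact (((𝓕 U).continuous.comp (by fun_prop)).enorm.measurable).mul
      (((𝓕 V).continuous.comp (by fun_prop)).enorm.measurable)
  have h4 : ∫⁻ w : ℝ × ℝ × ℝ, H ((2 * Real.pi)⁻¹ • w) =
      ENNReal.ofReal ((2 * Real.pi) ^ 3) * ∫⁻ p, H p := by
    have := lintegral_map (μ := volume) hHm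
      (measurable_const_smul ((2 * Real.pi)⁻¹) : Measurable fun w : ℝ × ℝ × ℝ => _)
    rw [← this, Measure.map_addHaar_smul volume (by positivity : (2 * Real.pi)⁻¹ ≠ 0),
      lintegral_smul_measure]
    simp only [Module.finrank_prod, Module.finrank_self, smul_eq_mul]
    congr 2
    rw [abs_of_pos (by positivity), inv_pow, inv_inv]
  have h5 : (1 : ℝ≥0∞) ≤ ENNReal.ofReal ((2 * Real.pi) ^ 3) := by
    rw [ENNReal.one_le_ofReal]
    exact one_le_pow₀ (by linarith [Real.pi_gt_three])
  calc ∫⁻ p, H p ≤ ENNReal.ofReal ((2 * Real.pi) ^ 3) * ∫⁻ p, H p := le_mul_of_one_le_left' h5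
    _ = ∫⁻ w : ℝ × ℝ × ℝ, H ((2 * Real.pi)⁻¹ • w) := h4.symm
    _ ≤ _ := by
        refine lintegral_mono fun w => le_of_eq ?_
        simp only [hH, hq, map_smul, map_sub, smul_sub]

/-! ### A bilinear Schur test -/

lemma lintegral_mul_sq_le {α : Type*} [MeasurableSpace α] {μ : Measure α} {f g : α → ℝ≥0∞}
    (hf : Measurable f) (hg : Measurable g) :
    (∫⁻ x, f x * g x ∂μ) ^ 2 ≤ (∫⁻ x, f x ^ 2 ∂μ) * ∫⁻ x, g x ^ 2 ∂μ := by
  have h := ENNReal.lintegral_mul_le_Lp_mul_Lq μ Real.HolderConjugate.two_two hf.aemeasurable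
    hg.aemeasurable
  simp only [Pi.mul_apply, ENNReal.rpow_two] at h
  calc (∫⁻ x, f x * g x ∂μ) ^ 2
      ≤ ((∫⁻ x, f x ^ 2 ∂μ) ^ (1 / 2 : ℝ) * (∫⁻ x, g x ^ 2 ∂μ) ^ (1 / 2 : ℝ)) ^ 2 := by gcongr
    _ = _ := by
      rw [mul_pow, ← ENNReal.rpow_two, ← ENNReal.rpow_two, ← ENNReal.rpow_mul, ← ENNReal.rpow_mul]
      norm_num

lemma sqrt_sq_enn (a : ℝ≥0∞) : (a ^ (1 / 2 : ℝ)) ^ 2 = a := by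
  rw [← ENNReal.rpow_two, ← ENNReal.rpow_mul]; norm_num

lemma sq_sqrt_enn (a : ℝ≥0∞) : (a ^ 2) ^ (1 / 2 : ℝ) = a := by
  rw [← ENNReal.rpow_two, ← ENNReal.rpow_mul]; norm_num

/-- Duality characterisation of the `L²` norm. Testing against square roots of simple functions of
finite integral avoids any a priori finiteness assumption on `T`. -/
lemma lintegral_sq_le_of_dual {α : Type*} [MeasurableSpace α] {μ : Measure α} [SigmaFinite μ]
    {T : α → ℝ≥0∞} (B : ℝ≥0∞)
    (h : ∀ φ : α → ℝ≥0∞, Measurable φ → (∫⁻ x, φ x * T x ∂μ) ^ 2 ≤ B * ∫⁻ x, φ x ^ 2 ∂μ) :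
    ∫⁻ x, T x ^ 2 ∂μ ≤ B := by
  refine le_of_forall_lt fun L hL => ?_
  obtain ⟨g, hgle, hgfin, hg⟩ : ∃ g : SimpleFunc α NNReal, (∀ x, (g x : ℝ≥0∞) ≤ T x ^ 2) ∧
      (∫⁻ x, (g x : ℝ≥0∞) ∂μ) < ⊤ ∧ L < ∫⁻ x, (g x : ℝ≥0∞) ∂μ := by
    rw [lintegral_eq_nnreal] at hL
    simp only [lt_iSup_iff] at hL
    obtain ⟨g₀, hg₀, hL₀⟩ := hL
    rw [← SimpleFunc.lintegral_eq_lintegral] at hL₀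
    obtain ⟨g, hgle, hgfin, hg⟩ := SimpleFunc.exists_lt_lintegral_simpleFunc_of_lt_lintegral
      (f := g₀) hL₀
    exact ⟨g, fun x => le_trans (by exact_mod_cast hgle x) (hg₀ x), hgfin, hg⟩
  set I := ∫⁻ x, (g x : ℝ≥0∞) ∂μ with hI
  have hgm : Measurable fun x => ((g x : ℝ≥0∞)) := g.measurable.coe_nnreal_ennreal
  have h1 := h (fun x => (g x : ℝ≥0∞) ^ (1 / 2 : ℝ)) (hgm.pow_const _)
  simp only [sqrt_sq_enn] at h1
  have h2 : I ≤ ∫⁻ x, (g x : ℝ≥0∞) ^ (1 / 2 : ℝ) * T x ∂μ := by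
    refine lintegral_mono fun x => ?_
    calc (g x : ℝ≥0∞) = (g x : ℝ≥0∞) ^ (1 / 2 : ℝ) * (g x : ℝ≥0∞) ^ (1 / 2 : ℝ) := by
          rw [← sq, sqrt_sq_enn]
      _ ≤ (g x : ℝ≥0∞) ^ (1 / 2 : ℝ) * T x := by
          gcongr
          rw [← sq_sqrt_enn (T x)]
          exact ENNReal.rpow_le_rpow (hgle x) (by norm_num)
  have h3 : I * I ≤ B * I := by
    calc I * I = I ^ 2 := (sq I).symm
      _ ≤ _ := by gcongr
      _ ≤ B * I := h1
  have hI0 : I ≠ 0 := (pos_of_gt hg).ne'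
  exact hg.trans_le ((ENNReal.mul_le_mul_iff_left hI0 hgfin.ne).1 h3)

/-- Frequency space-time. -/
abbrev R3 := ℝ × ℝ × ℝ

lemma conv_sq (f g : R3 → ℝ≥0∞) (hf : Measurable f) (hg : Measurable g) :
    ∫⁻ v, ∫⁻ w, f w ^ 2 * g (v - w) ^ 2 = (∫⁻ w, f w ^ 2) * ∫⁻ w, g w ^ 2 := by
  rw [lintegral_lintegral_swap]
  · rw [← lintegral_mul_const _ (by fun_prop)]
    refine lintegral_congr fun w => ?_
    rw [lintegral_const_mul _ (by fun_prop)]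
    congr 1
    exact lintegral_sub_right_eq_self (fun x => g x ^ 2) w
  · exact Measurable.aemeasurable (by fun_prop)

lemma schur_out (f g : R3 → ℝ≥0∞) (hf : Measurable f) (hg : Measurable g)
    (M : R3 → R3 → ℝ≥0∞) (hM : Measurable (Function.uncurry M)) (C : ℝ≥0∞)
    (hC : ∀ v, ∫⁻ w, M v w ≤ C) :
    ∫⁻ v, (∫⁻ w, M v w ^ (1 / 2 : ℝ) * (f w * g (v - w))) ^ 2 ≤
      C * ((∫⁻ w, f w ^ 2) * ∫⁻ w, g w ^ 2) := by
  rw [← conv_sq f g hf hg, ← lintegral_const_mul _ (by fun_prop)]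
  refine lintegral_mono fun v => ?_
  have hMv : Measurable (M v) := hM.of_uncurry_left
  refine (lintegral_mul_sq_le (hMv.pow_const _) (by fun_prop)).trans ?_
  simp only [sqrt_sq_enn, mul_pow]
  gcongr
  exact hC v

lemma schur_in (f g : R3 → ℝ≥0∞) (hf : Measurable f) (hg : Measurable g)
    (M : R3 → R3 → ℝ≥0∞) (hM : Measurable (Function.uncurry M)) (C : ℝ≥0∞)
    (hC : ∀ v, ∫⁻ w, M v w ≤ C) :
    ∫⁻ v, (∫⁻ w, M w v ^ (1 / 2 : ℝ) * (f w * g (v - w))) ^ 2 ≤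
      C * ((∫⁻ w, f w ^ 2) * ∫⁻ w, g w ^ 2) := by
  refine lintegral_sq_le_of_dual _ fun φ hφ => ?_
  have hM2 : Measurable fun p : R3 × R3 => M p.2 p.1 := hM.comp measurable_swap
  have hMw : ∀ w, Measurable (M w) := fun w => hM.of_uncurry_left
  have hg' : ∀ w, ∫⁻ v, φ v ^ 2 * g (v - w) ^ 2 = ∫⁻ v, φ v ^ 2 * (fun z => g (-z)) (w - v) ^ 2 := by
    intro w
    refine lintegral_congr fun v => ?_
    simp
  have e1 : ∫⁻ v, φ v * ∫⁻ w, M w v ^ (1 / 2 : ℝ) * (f w * g (v - w)) =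
      ∫⁻ w, f w * ∫⁻ v, M w v ^ (1 / 2 : ℝ) * (φ v * g (v - w)) := by
    calc _ = ∫⁻ v, ∫⁻ w, φ v * (M w v ^ (1 / 2 : ℝ) * (f w * g (v - w))) := by
          refine lintegral_congr fun v => ?_
          rw [lintegral_const_mul]
          have : Measurable fun w => M w v := hM.of_uncurry_right
          fun_prop
      _ = ∫⁻ w, ∫⁻ v, φ v * (M w v ^ (1 / 2 : ℝ) * (f w * g (v - w))) := by
          refine lintegral_lintegral_swap (Measurable.aemeasurable ?_)
          exact (hφ.comp measurable_fst).mul ((hM2.pow_const _).mul (by fun_prop))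
      _ = _ := by
          refine lintegral_congr fun w => ?_
          rw [← lintegral_const_mul]
          · refine lintegral_congr fun v => ?_
            ring
          · have := hMw w
            fun_prop
  rw [e1]
  have hm : Measurable fun w => ∫⁻ v, M w v ^ (1 / 2 : ℝ) * (φ v * g (v - w)) := by
    refine Measurable.lintegral_prod_right' (f := fun p : R3 × R3 =>
      M p.1 p.2 ^ (1 / 2 : ℝ) * (φ p.2 * g (p.2 - p.1))) ?_
    exact (hM.pow_const _).mul (by fun_prop)
  refine (lintegral_mul_sq_le hf hm).trans ?_
  have e2 : ∫⁻ w, (∫⁻ v, M w v ^ (1 / 2 : ℝ) * (φ v * g (v - w))) ^ 2 ≤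
      C * ((∫⁻ v, φ v ^ 2) * ∫⁻ v, g v ^ 2) := by
    have := schur_out φ (fun z => g (-z)) hφ (by fun_prop) M hM C hC
    have hneg : ∫⁻ w, g (-w) ^ 2 = ∫⁻ w, g w ^ 2 :=
      lintegral_neg_eq_self (fun w => g w ^ 2)
    simpa only [neg_sub, hneg] using this
  calc _ ≤ (∫⁻ w, f w ^ 2) * (C * ((∫⁻ v, φ v ^ 2) * ∫⁻ v, g v ^ 2)) := by gcongr
    _ = _ := by ring

/-- The bilinear Schur test: the squared kernel is split into three pieces, each of which has
bounded marginals when one of the three frequencies `v`, `w`, `v - w` is frozen. -/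
lemma schur_main (f g : R3 → ℝ≥0∞) (hf : Measurable f) (hg : Measurable g)
    (M : R3 → R3 → ℝ≥0∞) (hM : Measurable (Function.uncurry M)) (C : ℝ≥0∞)
    (hC : ∀ v, ∫⁻ w, M v w ≤ C) (K : R3 → R3 → ℝ≥0∞)
    (hK : ∀ v w, K v w ^ 2 ≤ M (-v) w + M w (-v) + M (v - w) (-v)) :
    ∫⁻ v, (∫⁻ w, K v w * (f w * g (v - w))) ^ 2 ≤
      9 * C * ((∫⁻ w, f w ^ 2) * ∫⁻ w, g w ^ 2) := by
  have hsq : ∀ a b c : ℝ≥0∞, (a + b + c) ^ (1 / 2 : ℝ) ≤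
      a ^ (1 / 2 : ℝ) + b ^ (1 / 2 : ℝ) + c ^ (1 / 2 : ℝ) := by
    intro a b c
    refine (ENNReal.rpow_add_le_add_rpow _ _ (by norm_num) (by norm_num)).trans ?_
    gcongr
    exact ENNReal.rpow_add_le_add_rpow _ _ (by norm_num) (by norm_num)
  have hsq3 : ∀ a b c : ℝ≥0∞, (a + b + c) ^ 2 ≤ 3 * a ^ 2 + 3 * b ^ 2 + 3 * c ^ 2 := by
    intro a b c
    induction a with
    | top => simp
    | coe a =>
    induction b with
    | top => simp
    | coe b =>
    induction c with
    | top => simp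
    | coe c =>
    norm_cast
    rw [← NNReal.coe_le_coe]
    push_cast
    nlinarith [sq_nonneg ((a : ℝ) - b), sq_nonneg ((a : ℝ) - c), sq_nonneg ((b : ℝ) - c)]
  have hM3 : Measurable (Function.uncurry fun v w => M (-v) w) :=
    hM.comp (by fun_prop : Measurable fun p : R3 × R3 => (-p.1, p.2))
  have hM1 : Measurable (Function.uncurry fun w v => M w (-v)) :=
    hM.comp (by fun_prop : Measurable fun p : R3 × R3 => (p.1, -p.2))
  have hC3 : ∀ v, ∫⁻ w, M (-v) w ≤ C := fun v => hC _
  have hC1 : ∀ w, ∫⁻ v, M w (-v) ≤ C := fun w => by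
    rw [lintegral_neg_eq_self (fun v => M w v)]
    exact hC w
  have i3 := schur_out f g hf hg _ hM3 C hC3
  have i1 := schur_in f g hf hg _ hM1 C hC1
  have i2 := schur_in g f hg hf _ hM1 C hC1
  have mM3 : ∀ v, Measurable fun w => M (-v) w ^ (1 / 2 : ℝ) * (f w * g (v - w)) := fun v =>
    (hM3.of_uncurry_left.pow_const _).mul (by fun_prop)
  have mM1 : ∀ v, Measurable fun w => M w (-v) ^ (1 / 2 : ℝ) * (f w * g (v - w)) := fun v =>
    (hM1.of_uncurry_right.pow_const _).mul (by fun_prop)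
  have mM2 : ∀ v, Measurable fun w => M (v - w) (-v) ^ (1 / 2 : ℝ) * (f w * g (v - w)) := fun v =>
    ((hM.comp (by fun_prop : Measurable fun w : R3 => (v - w, -v))).pow_const _).mul (by fun_prop)
  have jm3 : Measurable fun v => (∫⁻ w, M (-v) w ^ (1 / 2 : ℝ) * (f w * g (v - w))) ^ 2 := by
    refine (Measurable.lintegral_prod_right' (f := fun p : R3 × R3 =>
      M (-p.1) p.2 ^ (1 / 2 : ℝ) * (f p.2 * g (p.1 - p.2))) ?_).pow_const _
    exact (hM3.pow_const _).mul (by fun_prop)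
  have jm1 : Measurable fun v => (∫⁻ w, M w (-v) ^ (1 / 2 : ℝ) * (f w * g (v - w))) ^ 2 := by
    refine (Measurable.lintegral_prod_right' (f := fun p : R3 × R3 =>
      M p.2 (-p.1) ^ (1 / 2 : ℝ) * (f p.2 * g (p.1 - p.2))) ?_).pow_const _
    exact ((hM.comp (by fun_prop : Measurable fun p : R3 × R3 => (p.2, -p.1))).pow_const _).mul
      (by fun_prop)
  have jm2 : Measurable fun v => (∫⁻ w, M w (-v) ^ (1 / 2 : ℝ) * (g w * f (v - w))) ^ 2 := by
    refine (Measurable.lintegral_prod_right' (f := fun p : R3 × R3 =>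
      M p.2 (-p.1) ^ (1 / 2 : ℝ) * (g p.2 * f (p.1 - p.2))) ?_).pow_const _
    exact ((hM.comp (by fun_prop : Measurable fun p : R3 × R3 => (p.2, -p.1))).pow_const _).mul
      (by fun_prop)
  have swap2 : ∀ v, ∫⁻ w, M (v - w) (-v) ^ (1 / 2 : ℝ) * (f w * g (v - w)) =
      ∫⁻ w, M w (-v) ^ (1 / 2 : ℝ) * (g w * f (v - w)) := by
    intro v
    rw [← lintegral_sub_left_eq_self (fun w => M w (-v) ^ (1 / 2 : ℝ) * (g w * f (v - w))) v]
    refine lintegral_congr fun w => ?_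
    simp [mul_comm]
  calc _ ≤ ∫⁻ v, (3 * (∫⁻ w, M (-v) w ^ (1 / 2 : ℝ) * (f w * g (v - w))) ^ 2 +
          3 * (∫⁻ w, M w (-v) ^ (1 / 2 : ℝ) * (f w * g (v - w))) ^ 2 +
          3 * (∫⁻ w, M w (-v) ^ (1 / 2 : ℝ) * (g w * f (v - w))) ^ 2) := by
        refine lintegral_mono fun v => le_trans ?_ (hsq3 _ _ _)
        rw [← swap2, ← lintegral_add_left (mM3 v), ← lintegral_add_right _ (mM2 v)]
        gcongr with w
        rw [← add_mul, ← add_mul]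
        gcongr
        refine le_trans ?_ (hsq _ _ _)
        rw [← sq_sqrt_enn (K v w)]
        exact ENNReal.rpow_le_rpow (hK v w) (by norm_num)
    _ ≤ 3 * (C * ((∫⁻ w, f w ^ 2) * ∫⁻ w, g w ^ 2)) + 3 * (C * ((∫⁻ w, f w ^ 2) * ∫⁻ w, g w ^ 2)) +
        3 * (C * ((∫⁻ w, g w ^ 2) * ∫⁻ w, f w ^ 2)) := by
        rw [lintegral_add_right _ (jm2.const_mul _),
          lintegral_add_left (jm3.const_mul _), lintegral_const_mul _ jm3,
          lintegral_const_mul _ jm1, lintegral_const_mul' _ _ (by norm_num)]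
        gcongr
    _ = _ := by ring

/-! ### Comparison of the dyadic norm with weighted `L²` norms -/

/-- The frequency `ζ = ξ + η`. -/
def zt (v : R3) : ℝ := v.2.1 + v.2.2

/-- The modulation `σ = τ - ξ³ - η³`. -/
def sg (v : R3) : ℝ := v.1 - v.2.1 ^ 3 - v.2.2 ^ 3

/-- The quantity `Λ = 1 + ζ² + |σ|`, comparable with `⟨M² + L⟩` on a dyadic piece. -/
def lam (v : R3) : ℝ := 1 + zt v ^ 2 + |sg v|

lemma zt_continuous : Continuous zt := by unfold zt; fun_prop

lemma sg_continuous : Continuous sg := by unfold sg; fun_prop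

lemma lam_continuous : Continuous lam := by
  have := zt_continuous
  have := sg_continuous
  unfold lam; fun_prop

lemma one_le_lam (v : R3) : 1 ≤ lam v := by
  unfold lam; nlinarith [sq_nonneg (zt v), abs_nonneg (sg v)]

/-- The conditions on the cutoff `χ` that the norm comparison relies on. -/
structure CutOff (χ : ℝ → ℝ) : Prop where
  nonneg : ∀ t, 0 ≤ χ t
  le_one : ∀ t, χ t ≤ 1
  supp : Function.support χ ⊆ Set.Ioo (-2) 2
  one : ∀ t ∈ Set.Icc (-1 : ℝ) 1, χ t = 1

lemma CutOff.zero {χ : ℝ → ℝ} (h : CutOff χ) {t : ℝ} (ht : 2 ≤ |t|) : χ t = 0 := by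
  by_contra hne
  have := h.supp hne
  rw [Set.mem_Ioo, ← abs_lt] at this
  linarith

lemma CutOff.eq_one {χ : ℝ → ℝ} (h : CutOff χ) {t : ℝ} (ht : |t| ≤ 1) : χ t = 1 :=
  h.one t (by rwa [Set.mem_Icc, ← abs_le])

lemma CutOff.phi_sq_le {χ : ℝ → ℝ} (h : CutOff χ) (N t : ℝ) : phiCutD χ N t ^ 2 ≤ 1 := by
  rw [sq_le_one_iff_abs_le_one, abs_le]
  unfold phiCutD phiCut
  constructor <;> linarith [h.nonneg (t / N), h.le_one (t / N), h.nonneg (2 * (t / N)),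
    h.le_one (2 * (t / N))]

lemma CutOff.phi_supp {χ : ℝ → ℝ} (h : CutOff χ) {n : ℤ} {t : ℝ} (ht : phiCutD χ (2 ^ n) t ≠ 0) :
    (2 : ℝ) ^ n < 2 * |t| ∧ |t| < 2 * 2 ^ n := by
  have hp : (0 : ℝ) < 2 ^ n := by positivity
  have e : |t / 2 ^ n| = |t| / 2 ^ n := by rw [abs_div, abs_of_pos hp]
  constructor
  · by_contra hc
    push Not at hc
    apply ht
    have h1 : |2 * (t / 2 ^ n)| ≤ 1 := by
      rw [abs_mul, e, abs_of_pos (by norm_num : (0 : ℝ) < 2), ← mul_div_assoc, div_le_one hp]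
      exact hc
    have h2 : |t / 2 ^ n| ≤ 1 := by
      rw [abs_mul, abs_of_pos (by norm_num : (0 : ℝ) < 2)] at h1
      linarith [abs_nonneg (t / 2 ^ n)]
    unfold phiCutD phiCut
    rw [h.eq_one h1, h.eq_one h2, sub_self]
  · by_contra hc
    push Not at hc
    apply ht
    have h2 : 2 ≤ |t / 2 ^ n| := by
      rw [e, le_div_iff₀ hp]
      exact hc
    have h1 : 2 ≤ |2 * (t / 2 ^ n)| := by
      rw [abs_mul, abs_of_pos (by norm_num : (0 : ℝ) < 2)]
      linarith
    unfold phiCutD phiCut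
    rw [h.zero h1, h.zero h2, sub_self]

open Classical in
/-- At each point at most two of the dyadic cutoffs are non-zero. -/
lemma CutOff.count {χ : ℝ → ℝ} (h : CutOff χ) (t : ℝ) :
    ∑' n : ℤ, (if phiCutD χ (2 ^ n) t ≠ 0 then (1 : ℝ≥0∞) else 0) ≤ 2 := by
  set n0 := Int.log 2 |t| with hn0
  rw [tsum_eq_sum (s := {n0, n0 + 1})]
  · refine (Finset.sum_le_card_nsmul _ _ 1 fun n _ => ?_).trans ?_
    · split_ifs <;> simp
    · rw [nsmul_eq_mul, mul_one]
      exact_mod_cast Finset.card_le_two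
  · intro n hn
    by_contra hne
    rw [ite_eq_right_iff] at hne
    push Not at hne
    obtain ⟨h1, h2⟩ := h.phi_supp hne.1
    have hp : (0 : ℝ) < 2 ^ n := by positivity
    have htpos : 0 < |t| := by linarith
    have l1 := Int.zpow_log_le_self (b := 2) (by norm_num) htpos
    have l2 := Int.lt_zpow_succ_log_self (b := 2) (by norm_num) |t|
    push_cast at l1 l2
    rw [← hn0] at l1 l2
    have k1 : n - 1 < n0 + 1 := by
      rw [← zpow_lt_zpow_iff_right₀ (by norm_num : (1 : ℝ) < 2), zpow_sub_one₀ (by norm_num)]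
      linarith
    have k2 : n0 < n + 1 := by
      rw [← zpow_lt_zpow_iff_right₀ (by norm_num : (1 : ℝ) < 2), zpow_add_one₀ (by norm_num)]
      linarith
    apply hn
    simp only [Finset.mem_insert, Finset.mem_singleton]
    omega

/-- Away from the origin, one of the dyadic cutoffs is at least `1/2`. -/
lemma CutOff.exists_large {χ : ℝ → ℝ} (h : CutOff χ) {t : ℝ} (ht : t ≠ 0) :
    ∃ n : ℤ, 1 / 4 ≤ phiCutD χ (2 ^ n) t ^ 2 := by
  have htpos : 0 < |t| := abs_pos.2 ht
  set n0 := Int.log 2 |t| with hn0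
  have l1 := Int.zpow_log_le_self (b := 2) (by norm_num) htpos
  have l2 := Int.lt_zpow_succ_log_self (b := 2) (by norm_num) |t|
  push_cast at l1 l2
  rw [← hn0] at l1 l2
  have hp : (0 : ℝ) < 2 ^ n0 := by positivity
  rw [zpow_add_one₀ (by norm_num)] at l2
  -- consecutive cutoffs telescope
  have e1 : χ (t / 2 ^ (n0 + 1)) = 1 := by
    refine h.eq_one ?_
    have hp' : (0 : ℝ) < 2 ^ (n0 + 1) := by positivity
    rw [abs_div, abs_of_pos hp', div_le_one hp', zpow_add_one₀ (by norm_num)]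
    exact l2.le
  have e2 : χ (2 * (t / 2 ^ n0)) = 0 := by
    refine h.zero ?_
    rw [abs_mul, abs_div, abs_of_pos hp, abs_of_pos (by norm_num : (0 : ℝ) < 2)]
    have : 1 ≤ |t| / 2 ^ n0 := by rwa [le_div_iff₀ hp, one_mul]
    linarith
  have e3 : 2 * (t / 2 ^ (n0 + 1)) = t / 2 ^ n0 := by
    rw [zpow_add_one₀ (by norm_num)]; field_simp
  have hsum : phiCutD χ (2 ^ n0) t + phiCutD χ (2 ^ (n0 + 1)) t = 1 := by
    unfold phiCutD phiCut
    rw [e1, e2, e3]; ring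
  by_contra hc
  push Not at hc
  have c1 := hc n0
  have c2 := hc (n0 + 1)
  nlinarith [sq_nonneg (phiCutD χ (2 ^ n0) t - phiCutD χ (2 ^ (n0 + 1)) t)]

lemma rpow_compare {A B c : ℝ} (p : ℝ) (hA : 0 < A) (hB : 0 < B) (hc : 1 ≤ c) (h1 : A ≤ c * B)
    (h2 : B ≤ c * A) : A ^ p ≤ c ^ |p| * B ^ p := by
  have hc0 : 0 < c := by linarith
  rcases le_total 0 p with hp | hp
  · rw [abs_of_nonneg hp, ← Real.mul_rpow hc0.le hB.le]
    exact Real.rpow_le_rpow hA.le h1 hp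
  · rw [abs_of_nonpos hp]
    have : (c * A) ^ p ≤ B ^ p := Real.rpow_le_rpow_of_nonpos hB h2 hp
    rw [Real.mul_rpow hc0.le hA.le] at this
    calc A ^ p = c ^ (-p) * (c ^ p * A ^ p) := by
          rw [← mul_assoc, ← Real.rpow_add hc0]; simp
      _ ≤ _ := by gcongr

/-- The weight `⟨M⟩^s ⟨M² + L⟩^b` of the dyadic norm. -/
def jw (s b : ℝ) (m l : ℤ) : ℝ := jbr ((2 : ℝ) ^ m) s * jbr (((2 : ℝ) ^ m) ^ 2 + (2 : ℝ) ^ l) b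

lemma jw_sq (s b : ℝ) (m l : ℤ) : jw s b m l ^ 2 =
    (1 + ((2 : ℝ) ^ m) ^ 2) ^ s * (1 + (((2 : ℝ) ^ m) ^ 2 + (2 : ℝ) ^ l) ^ 2) ^ b := by
  have h : ∀ x p : ℝ, 0 ≤ x → (x ^ (p / 2)) ^ 2 = x ^ p := fun x p hx => by
    rw [← Real.rpow_natCast, ← Real.rpow_mul hx]; norm_num
  unfold jw jbr
  rw [mul_pow, h _ _ (by positivity), h _ _ (by positivity)]

/-- The weight of the dyadic norm is comparable with its continuous analogue on the support of the
dyadic cutoffs. -/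
lemma jw_compare (s b : ℝ) (m l : ℤ) (v : R3)
    (hm : (2 : ℝ) ^ m < 2 * |zt v| ∧ |zt v| < 2 * 2 ^ m)
    (hl : (2 : ℝ) ^ l < 2 * |sg v| ∧ |sg v| < 2 * 2 ^ l) :
    jw s b m l ^ 2 ≤ (4 ^ |s| * 32 ^ |b|) * ((1 + zt v ^ 2) ^ s * (lam v ^ 2) ^ b) ∧
    (1 + zt v ^ 2) ^ s * (lam v ^ 2) ^ b ≤ (4 ^ |s| * 32 ^ |b|) * jw s b m l ^ 2 := by
  rw [jw_sq]
  set M : ℝ := 2 ^ m with hM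
  set L : ℝ := 2 ^ l with hL
  have hMp : 0 < M := by positivity
  have hLp : 0 < L := by positivity
  have hlam := one_le_lam v
  have hz : zt v ^ 2 = |zt v| ^ 2 := (sq_abs _).symm
  have a1 : 1 + M ^ 2 ≤ 4 * (1 + zt v ^ 2) := by rw [hz]; nlinarith [hm.1]
  have a2 : 1 + zt v ^ 2 ≤ 4 * (1 + M ^ 2) := by rw [hz]; nlinarith [hm.2, abs_nonneg (zt v)]
  have b0 : 1 + M ^ 2 + L ≤ 4 * lam v := by unfold lam; nlinarith [hl.1]
  have b0' : lam v ≤ 4 * (1 + M ^ 2 + L) := by unfold lam; nlinarith [hl.2]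
  have b1 : 1 + (M ^ 2 + L) ^ 2 ≤ 32 * lam v ^ 2 := by
    have : 0 < M ^ 2 + L := by positivity
    nlinarith
  have b2 : lam v ^ 2 ≤ 32 * (1 + (M ^ 2 + L) ^ 2) := by
    have : 0 < M ^ 2 + L := by positivity
    have : lam v ^ 2 ≤ (4 * (1 + (M ^ 2 + L))) ^ 2 := by
      gcongr; linarith
    nlinarith [sq_nonneg (M ^ 2 + L - 1)]
  have p1 : 0 < 1 + zt v ^ 2 := by positivity
  have p2 : 0 < lam v ^ 2 := by positivity
  have c1 := rpow_compare s (by positivity) p1 (by norm_num : (1 : ℝ) ≤ 4) a1 a2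
  have c1' := rpow_compare s p1 (by positivity) (by norm_num : (1 : ℝ) ≤ 4) a2 a1
  have c2 := rpow_compare b (by positivity) p2 (by norm_num : (1 : ℝ) ≤ 32) b1 b2
  have c2' := rpow_compare b p2 (by positivity) (by norm_num : (1 : ℝ) ≤ 32) b2 b1
  constructor
  · calc _ ≤ (4 ^ |s| * (1 + zt v ^ 2) ^ s) * (32 ^ |b| * (lam v ^ 2) ^ b) := by gcongr
      _ = _ := by ring
  · calc _ ≤ (4 ^ |s| * (1 + M ^ 2) ^ s) * (32 ^ |b| * (1 + (M ^ 2 + L) ^ 2) ^ b) := by gcongr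
      _ = _ := by ring

/-- The square of the multiplier of `P_{N,M} Q_L`. -/
def cutSq (χ : ℝ → ℝ) (n m l : ℤ) (v : R3) : ℝ :=
  (phiCutD χ (2 ^ n) (Real.sqrt (v.2.1 ^ 2 + v.2.2 ^ 2)) * phiCutD χ (2 ^ m) (zt v) *
    phiCutD χ (2 ^ l) (sg v)) ^ 2

lemma PQLnorm_sq (χ : ℝ → ℝ) (n m l : ℤ) (w : ℝ → ℝ → ℝ → ℂ) :
    PQLnorm χ (2 ^ n) (2 ^ m) (2 ^ l) w ^ 2 =
      ∫⁻ v : R3, ENNReal.ofReal (cutSq χ n m l v) * ‖ftt w v.1 v.2.1 v.2.2‖ₑ ^ 2 := by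
  unfold PQLnorm
  rw [sqrt_sq_enn]
  refine lintegral_congr fun v => ?_
  rw [ENNReal.ofReal_mul (sq_nonneg _), ENNReal.ofReal_pow (norm_nonneg _), ofReal_norm]
  rfl

lemma cutSq_continuous {χ : ℝ → ℝ} (hχ : Continuous χ) (n m l : ℤ) : Continuous (cutSq χ n m l) := by
  have := zt_continuous
  have := sg_continuous
  unfold cutSq phiCutD phiCut
  fun_prop

lemma tsum_sq_le {a : ℤ → ℝ≥0∞} : ∑' l, a l ^ 2 ≤ (∑' l, a l) ^ 2 := by
  rw [sq, ← ENNReal.tsum_mul_right]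
  refine ENNReal.tsum_le_tsum fun l => ?_
  rw [sq]
  gcongr
  exact ENNReal.le_tsum l

lemma tsum_mul_sq_le (a b : ℤ → ℝ≥0∞) :
    (∑' l, a l * b l) ^ 2 ≤ (∑' l, a l ^ 2) * ∑' l, b l ^ 2 := by
  simp_rw [← lintegral_count]
  exact lintegral_mul_sq_le (measurable_from_top) (measurable_from_top)

lemma Xtnorm_sq (χ : ℝ → ℝ) (s b : ℝ) (w : ℝ → ℝ → ℝ → ℂ) :
    Xtnorm χ s b w ^ 2 = ∑' n : ℤ, ∑' m : ℤ, (∑' l : ℤ, ENNReal.ofReal (jw s b m l) *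
      PQLnorm χ (2 ^ n) (2 ^ m) (2 ^ l) w) ^ 2 := by
  unfold Xtnorm
  rw [sqrt_sq_enn]
  rfl

/-- Interchange of the dyadic sums with the integral. -/
lemma tsum_pieces {χ : ℝ → ℝ} (hχ : Continuous χ) (c : ℤ → ℤ → ℝ≥0∞) (w : ℝ → ℝ → ℝ → ℂ)
    (hw : Continuous fun v : R3 => ftt w v.1 v.2.1 v.2.2) :
    ∑' n : ℤ, ∑' m : ℤ, ∑' l : ℤ, c m l * PQLnorm χ (2 ^ n) (2 ^ m) (2 ^ l) w ^ 2 =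
      ∫⁻ v : R3, (∑' n : ℤ, ∑' m : ℤ, ∑' l : ℤ, c m l * ENNReal.ofReal (cutSq χ n m l v)) *
        ‖ftt w v.1 v.2.1 v.2.2‖ₑ ^ 2 := by
  have hm0 : ∀ n m l, Measurable fun v : R3 => c m l * ENNReal.ofReal (cutSq χ n m l v) *
      ‖ftt w v.1 v.2.1 v.2.2‖ₑ ^ 2 := fun n m l =>
    (measurable_const.mul (cutSq_continuous hχ n m l).measurable.ennreal_ofReal).mul
      (hw.enorm.measurable.pow_const _)
  have hm1 : ∀ n m, Measurable fun v : R3 => ∑' l : ℤ, c m l * ENNReal.ofReal (cutSq χ n m l v) *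
      ‖ftt w v.1 v.2.1 v.2.2‖ₑ ^ 2 := fun n m => Measurable.tsum fun l => hm0 n m l
  have hm2 : ∀ n, Measurable fun v : R3 => ∑' m : ℤ, ∑' l : ℤ,
      c m l * ENNReal.ofReal (cutSq χ n m l v) *
      ‖ftt w v.1 v.2.1 v.2.2‖ₑ ^ 2 := fun n => Measurable.tsum fun m => hm1 n m
  simp_rw [← ENNReal.tsum_mul_right]
  rw [lintegral_tsum fun n => (hm2 n).aemeasurable]
  refine tsum_congr fun n => ?_
  rw [lintegral_tsum fun m => (hm1 n m).aemeasurable]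
  refine tsum_congr fun m => ?_
  rw [lintegral_tsum fun l => (hm0 n m l).aemeasurable]
  refine tsum_congr fun l => ?_
  rw [PQLnorm_sq, ← lintegral_const_mul]
  · simp_rw [mul_assoc]
  · exact (cutSq_continuous hχ n m l).measurable.ennreal_ofReal.mul
      (hw.enorm.measurable.pow_const _)

/-- The square of the weight for which the weighted `L²` norm controls the output norm. -/
def wout (s ε : ℝ) (v : R3) : ℝ :=
  (1 + zt v ^ 2) ^ s * (lam v)⁻¹ * (|sg v| ^ (-ε) + |sg v| ^ ε)

/-- The square of the weight whose weighted `L²` norm is controlled by the input norms. -/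
def win (s ε : ℝ) (v : R3) : ℝ := (1 + zt v ^ 2) ^ s * lam v ^ (1 - ε)

lemma summable_geom_abs {ε : ℝ} (hε : 0 < ε) :
    ∑' l : ℤ, (ENNReal.ofReal (2 ^ (-(ε / 2) * |(l : ℝ)|))) ^ 2 ≠ ⊤ := by
  have hr : (2 : ℝ) ^ (-ε) < 1 := Real.rpow_lt_one_of_one_lt_of_neg (by norm_num) (by linarith)
  have h0 : (0 : ℝ) ≤ 2 ^ (-ε) := by positivity
  have key : Summable fun l : ℤ => ((2 : ℝ) ^ (-(ε / 2) * |(l : ℝ)|)) ^ 2 := by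
    have e : ∀ l : ℤ, ((2 : ℝ) ^ (-(ε / 2) * |(l : ℝ)|)) ^ 2 = ((2 : ℝ) ^ (-ε)) ^ l.natAbs := by
      intro l
      rw [← Real.rpow_natCast, ← Real.rpow_natCast, ← Real.rpow_mul (by norm_num),
        ← Real.rpow_mul (by norm_num)]
      congr 1
      rw [Nat.cast_natAbs]
      push_cast
      ring
    simp_rw [e]
    refine Summable.of_nat_of_neg ?_ ?_ <;> simpa using summable_geometric_of_lt_one h0 hr
  simp_rw [← ENNReal.ofReal_pow (Real.rpow_nonneg (by norm_num : (0 : ℝ) ≤ 2) _)]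
  exact key.tsum_ofReal_ne_top

lemma two_rpow_abs_le {ε : ℝ} (hε : 0 < ε) (hε1 : ε ≤ 1) (l : ℤ) {x : ℝ}
    (h : (2 : ℝ) ^ l < 2 * x ∧ x < 2 * 2 ^ l) :
    (2 : ℝ) ^ (ε * |(l : ℝ)|) ≤ 2 * (x ^ (-ε) + x ^ ε) := by
  have hp : (0 : ℝ) < 2 ^ l := by positivity
  have hx : 0 < x := by linarith
  have h2 : (2 : ℝ) ^ ε ≤ 2 := by
    calc (2 : ℝ) ^ ε ≤ 2 ^ (1 : ℝ) := Real.rpow_le_rpow_of_exponent_le (by norm_num) hε1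
      _ = 2 := by norm_num
  have hxa : 0 < x ^ ε := by positivity
  have hxb : 0 < x ^ (-ε) := by positivity
  have hl : ((2 : ℝ) ^ l) = (2 : ℝ) ^ (l : ℝ) := (Real.rpow_intCast 2 l).symm
  rcases le_total 0 (l : ℝ) with h0 | h0
  · rw [abs_of_nonneg h0, mul_comm ε, Real.rpow_mul (by norm_num), ← hl]
    calc ((2 : ℝ) ^ l) ^ ε ≤ (2 * x) ^ ε := Real.rpow_le_rpow hp.le h.1.le hε.le
      _ = 2 ^ ε * x ^ ε := Real.mul_rpow (by norm_num) hx.le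
      _ ≤ 2 * (x ^ (-ε) + x ^ ε) := by nlinarith
  · rw [abs_of_nonpos h0, show ε * -(l : ℝ) = l * (-ε) by ring, Real.rpow_mul (by norm_num), ← hl]
    calc ((2 : ℝ) ^ l) ^ (-ε) ≤ (x / 2) ^ (-ε) :=
          Real.rpow_le_rpow_of_nonpos (by positivity) (by linarith [h.2]) (by linarith)
      _ = 2 ^ ε * x ^ (-ε) := by
          rw [Real.div_rpow hx.le (by norm_num), Real.rpow_neg (by norm_num : (0 : ℝ) ≤ 2) ε,
            div_inv_eq_mul, mul_comm]
      _ ≤ 2 * (x ^ (-ε) + x ^ ε) := by nlinarith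

/-- The output norm is dominated by a weighted `L²` norm. The `ℓ¹` sum in the modulation is turned
into an `ℓ²` sum by Cauchy-Schwarz, at the price of the factor `|σ|^{-ε} + |σ|^ε`. -/
lemma Xtnorm_out_le {χ : ℝ → ℝ} (h : CutOff χ) (hχ : Continuous χ) (s : ℝ) {ε : ℝ} (hε : 0 < ε)
    (hε1 : ε ≤ 1) : ∃ C : ℝ≥0∞, C ≠ ⊤ ∧ ∀ w : ℝ → ℝ → ℝ → ℂ,
      Continuous (fun v : R3 => ftt w v.1 v.2.1 v.2.2) →
      Xtnorm χ s (-(1 / 2)) w ^ 2 ≤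
        C * ∫⁻ v : R3, ENNReal.ofReal (wout s ε v) * ‖ftt w v.1 v.2.1 v.2.2‖ₑ ^ 2 := by
  classical
  set S := ∑' l : ℤ, (ENNReal.ofReal (2 ^ (-(ε / 2) * |(l : ℝ)|))) ^ 2 with hS
  set c : ℝ := (4 : ℝ) ^ |s| * 32 ^ |(-(1 / 2) : ℝ)| with hc
  have hc0 : 0 ≤ c := by positivity
  refine ⟨S * (16 * ENNReal.ofReal c), ?_, fun w hw => ?_⟩
  · exact ENNReal.mul_ne_top (summable_geom_abs hε)
      (ENNReal.mul_ne_top (by norm_num) ENNReal.ofReal_ne_top)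
  rw [Xtnorm_sq]
  -- the summation weight `d l = 2 ^ (ε |l| / 2)`
  set d : ℤ → ℝ≥0∞ := fun l => ENNReal.ofReal (2 ^ (ε / 2 * |(l : ℝ)|)) with hd
  have step1 : ∀ n m : ℤ, (∑' l : ℤ, ENNReal.ofReal (jw s (-(1 / 2)) m l) *
      PQLnorm χ (2 ^ n) (2 ^ m) (2 ^ l) w) ^ 2 ≤ S * ∑' l : ℤ,
        (d l * ENNReal.ofReal (jw s (-(1 / 2)) m l)) ^ 2 *
          PQLnorm χ (2 ^ n) (2 ^ m) (2 ^ l) w ^ 2 := by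
    intro n m
    simp_rw [← mul_pow]
    refine le_trans (le_of_eq ?_) (tsum_mul_sq_le _ _)
    congr 2
    funext l
    rw [← mul_assoc, ← mul_assoc, ← ENNReal.ofReal_mul (by positivity),
      ← Real.rpow_add (by norm_num)]
    simp
  calc _ ≤ ∑' n : ℤ, ∑' m : ℤ, S * ∑' l : ℤ,
        (d l * ENNReal.ofReal (jw s (-(1 / 2)) m l)) ^ 2 *
          PQLnorm χ (2 ^ n) (2 ^ m) (2 ^ l) w ^ 2 :=
        ENNReal.tsum_le_tsum fun n => ENNReal.tsum_le_tsum fun m => step1 n m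
    _ = S * ∫⁻ v : R3, (∑' n : ℤ, ∑' m : ℤ, ∑' l : ℤ,
          (d l * ENNReal.ofReal (jw s (-(1 / 2)) m l)) ^ 2 * ENNReal.ofReal (cutSq χ n m l v)) *
        ‖ftt w v.1 v.2.1 v.2.2‖ₑ ^ 2 := by
        simp_rw [ENNReal.tsum_mul_left]
        rw [tsum_pieces hχ _ w hw]
    _ ≤ _ := by
        rw [mul_assoc]
        gcongr
        rw [← lintegral_const_mul' _ _
          (ENNReal.mul_ne_top (by norm_num) ENNReal.ofReal_ne_top)]
        refine lintegral_mono fun v => ?_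
        rw [← mul_assoc]
        gcongr
        set i1 : ℤ → ℝ≥0∞ := fun n =>
          if phiCutD χ (2 ^ n) (Real.sqrt (v.2.1 ^ 2 + v.2.2 ^ 2)) ≠ 0 then 1 else 0 with hi1
        set i2 : ℤ → ℝ≥0∞ := fun n => if phiCutD χ (2 ^ n) (zt v) ≠ 0 then 1 else 0 with hi2
        set i3 : ℤ → ℝ≥0∞ := fun n => if phiCutD χ (2 ^ n) (sg v) ≠ 0 then 1 else 0 with hi3
        have hterm : ∀ n m l : ℤ, (d l * ENNReal.ofReal (jw s (-(1 / 2)) m l)) ^ 2 *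
            ENNReal.ofReal (cutSq χ n m l v) ≤
            2 * ENNReal.ofReal c * ENNReal.ofReal (wout s ε v) * (i1 n * (i2 m * i3 l)) := by
          intro n m l
          by_cases h1 : phiCutD χ (2 ^ n) (Real.sqrt (v.2.1 ^ 2 + v.2.2 ^ 2)) = 0
          · simp [cutSq, h1]
          by_cases h2 : phiCutD χ (2 ^ m) (zt v) = 0
          · simp [cutSq, h2]
          by_cases h3 : phiCutD χ (2 ^ l) (sg v) = 0
          · simp [cutSq, h3]
          have e : i1 n * (i2 m * i3 l) = 1 := by simp [hi1, hi2, hi3, h1, h2, h3]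
          have hcut : cutSq χ n m l v ≤ 1 := by
            unfold cutSq
            rw [mul_pow, mul_pow]
            exact mul_le_one₀ (mul_le_one₀ (h.phi_sq_le _ _) (sq_nonneg _) (h.phi_sq_le _ _))
              (sq_nonneg _) (h.phi_sq_le _ _)
          have hj := (jw_compare s (-(1 / 2)) m l v (h.phi_supp h2) (h.phi_supp h3)).1
          have hd2 := two_rpow_abs_le hε hε1 l (h.phi_supp h3)
          have hlam : (lam v ^ 2) ^ (-(1 / 2) : ℝ) = (lam v)⁻¹ := by
            have : 0 ≤ lam v := by linarith [one_le_lam v]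
            rw [← Real.rpow_natCast, ← Real.rpow_mul this, ← Real.rpow_neg_one]
            norm_num
          rw [hlam] at hj
          have hjn : 0 ≤ jw s (-(1 / 2)) m l := by unfold jw jbr; positivity
          have hlp : 0 < lam v := by linarith [one_le_lam v]
          rw [e, mul_one, hd, ← ENNReal.ofReal_mul (by positivity),
            ← ENNReal.ofReal_pow (by positivity), ← ENNReal.ofReal_mul (by positivity),
            mul_assoc, ← ENNReal.ofReal_mul hc0,
            show (2 : ℝ≥0∞) = ENNReal.ofReal 2 by norm_num, ← ENNReal.ofReal_mul (by norm_num)]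
          refine ENNReal.ofReal_le_ofReal ?_
          have e2 : ((2 : ℝ) ^ (ε / 2 * |(l : ℝ)|)) ^ 2 = 2 ^ (ε * |(l : ℝ)|) := by
            rw [← Real.rpow_natCast, ← Real.rpow_mul (by norm_num)]
            congr 1; push_cast; ring
          rw [mul_pow, e2]
          calc _ ≤ (2 * (|sg v| ^ (-ε) + |sg v| ^ ε)) *
                (c * ((1 + zt v ^ 2) ^ s * (lam v)⁻¹)) * 1 := by
                gcongr
                exact sq_nonneg _
            _ = _ := by unfold wout; ring
        calc _ ≤ ∑' n : ℤ, ∑' m : ℤ, ∑' l : ℤ,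
              2 * ENNReal.ofReal c * ENNReal.ofReal (wout s ε v) * (i1 n * (i2 m * i3 l)) :=
              ENNReal.tsum_le_tsum fun n => ENNReal.tsum_le_tsum fun m =>
                ENNReal.tsum_le_tsum fun l => hterm n m l
          _ = 2 * ENNReal.ofReal c * ENNReal.ofReal (wout s ε v) *
              ((∑' n, i1 n) * ((∑' m, i2 m) * ∑' l, i3 l)) := by
              simp_rw [ENNReal.tsum_mul_left, ENNReal.tsum_mul_right]
          _ ≤ 2 * ENNReal.ofReal c * ENNReal.ofReal (wout s ε v) * (2 * (2 * 2)) := by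
              gcongr
              · exact h.count _
              · exact h.count _
              · exact h.count _
          _ = _ := by ring

lemma ae_zt_ne : ∀ᵐ v : R3, zt v ≠ 0 := by
  rw [ae_iff]
  simp only [not_not]
  have hms : MeasurableSet {v : R3 | zt v = 0} :=
    (isClosed_singleton.preimage zt_continuous).measurableSet
  have e := Measure.prod_apply (μ := (volume : Measure ℝ)) (ν := (volume : Measure (ℝ × ℝ))) hms
  refine e.trans ?_
  rw [lintegral_eq_zero_of_ae_eq_zero]
  refine Filter.Eventually.of_forall fun τ => ?_
  have hms2 : MeasurableSet (Prod.mk τ ⁻¹' {v : R3 | zt v = 0}) := measurable_prodMk_left hms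
  refine (Measure.prod_apply_symm (μ := (volume : Measure ℝ)) (ν := (volume : Measure ℝ))
    hms2).trans ?_
  refine lintegral_eq_zero_of_ae_eq_zero (Filter.Eventually.of_forall fun η => ?_)
  have : (fun x => (x, η)) ⁻¹' (Prod.mk τ ⁻¹' {v : R3 | zt v = 0}) = {-η} := by
    ext x
    simp [zt, add_eq_zero_iff_eq_neg]
  simp only [this, Real.volume_singleton, Pi.zero_apply]

lemma ae_sg_ne : ∀ᵐ v : R3, sg v ≠ 0 := by
  rw [ae_iff]
  simp only [not_not]
  have hms : MeasurableSet {v : R3 | sg v = 0} :=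
    (isClosed_singleton.preimage sg_continuous).measurableSet
  refine (Measure.prod_apply_symm (μ := (volume : Measure ℝ)) (ν := (volume : Measure (ℝ × ℝ)))
    hms).trans ?_
  rw [lintegral_eq_zero_of_ae_eq_zero]
  filter_upwards with q
  have : (fun x => (x, q)) ⁻¹' {v : R3 | sg v = 0} = {q.1 ^ 3 + q.2 ^ 3} := by
    ext x
    simp [sg, sub_sub, sub_eq_zero]
  simp only [this, Real.volume_singleton, Pi.zero_apply]

lemma le_Xtnorm_in {χ : ℝ → ℝ} (h : CutOff χ) (hχ : Continuous χ) (s ε : ℝ) :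
    ∃ C : ℝ≥0∞, C ≠ ⊤ ∧ ∀ w : ℝ → ℝ → ℝ → ℂ,
      Continuous (fun v : R3 => ftt w v.1 v.2.1 v.2.2) →
      ∫⁻ v : R3, ENNReal.ofReal (win s ε v) * ‖ftt w v.1 v.2.1 v.2.2‖ₑ ^ 2 ≤
        C * Xtnorm χ s ((1 - ε) / 2) w ^ 2 := by
  set c : ℝ := (4 : ℝ) ^ |s| * 32 ^ |((1 - ε) / 2 : ℝ)| with hc
  have hc0 : 0 ≤ c := by positivity
  refine ⟨ENNReal.ofReal (64 * c), ENNReal.ofReal_ne_top, fun w hw => ?_⟩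
  calc _ ≤ ∫⁻ v : R3, ENNReal.ofReal (64 * c) * ((∑' n : ℤ, ∑' m : ℤ, ∑' l : ℤ,
          (ENNReal.ofReal (jw s ((1 - ε) / 2) m l)) ^ 2 * ENNReal.ofReal (cutSq χ n m l v)) *
        ‖ftt w v.1 v.2.1 v.2.2‖ₑ ^ 2) := by
        refine lintegral_mono_ae ?_
        filter_upwards [ae_zt_ne, ae_sg_ne] with v hz hsg
        rw [← mul_assoc]
        gcongr
        have hrho : Real.sqrt (v.2.1 ^ 2 + v.2.2 ^ 2) ≠ 0 := by
          rw [Real.sqrt_ne_zero (by positivity)]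
          intro h0
          have h1 : v.2.1 = 0 := by nlinarith [sq_nonneg v.2.1, sq_nonneg v.2.2]
          have h2 : v.2.2 = 0 := by nlinarith [sq_nonneg v.2.1, sq_nonneg v.2.2]
          exact hz (by simp [zt, h1, h2])
        obtain ⟨n, hn⟩ := h.exists_large hrho
        obtain ⟨m, hm⟩ := h.exists_large hz
        obtain ⟨l, hl⟩ := h.exists_large hsg
        have hcut : 1 / 64 ≤ cutSq χ n m l v := by
          unfold cutSq
          rw [mul_pow, mul_pow]
          calc (1 / 64 : ℝ) = 1 / 4 * (1 / 4) * (1 / 4) := by norm_num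
            _ ≤ _ := by gcongr
        have hm' : phiCutD χ (2 ^ m) (zt v) ≠ 0 := by
          intro h0; rw [h0] at hm; norm_num at hm
        have hl' : phiCutD χ (2 ^ l) (sg v) ≠ 0 := by
          intro h0; rw [h0] at hl; norm_num at hl
        have hj := (jw_compare s ((1 - ε) / 2) m l v (h.phi_supp hm') (h.phi_supp hl')).2
        have hlam : (lam v ^ 2) ^ ((1 - ε) / 2 : ℝ) = lam v ^ (1 - ε) := by
          have : 0 ≤ lam v := by linarith [one_le_lam v]
          rw [← Real.rpow_natCast, ← Real.rpow_mul this]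
          congr 1; push_cast; ring
        rw [hlam] at hj
        have hjn : 0 ≤ jw s ((1 - ε) / 2) m l := by unfold jw jbr; positivity
        calc ENNReal.ofReal (win s ε v) ≤ ENNReal.ofReal (64 * c) *
              ((ENNReal.ofReal (jw s ((1 - ε) / 2) m l)) ^ 2 * ENNReal.ofReal (cutSq χ n m l v)) := by
              rw [← ENNReal.ofReal_pow hjn, ← ENNReal.ofReal_mul (by positivity),
                ← ENNReal.ofReal_mul (by positivity)]
              refine ENNReal.ofReal_le_ofReal ?_
              calc win s ε v ≤ c * jw s ((1 - ε) / 2) m l ^ 2 := hj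
                _ = 64 * c * (jw s ((1 - ε) / 2) m l ^ 2 * (1 / 64)) := by ring
                _ ≤ _ := by gcongr
          _ ≤ _ := by
              gcongr
              refine le_trans ?_ (ENNReal.le_tsum n)
              refine le_trans ?_ (ENNReal.le_tsum m)
              exact le_trans le_rfl (ENNReal.le_tsum l)
    _ = ENNReal.ofReal (64 * c) * ∑' n : ℤ, ∑' m : ℤ, ∑' l : ℤ,
          (ENNReal.ofReal (jw s ((1 - ε) / 2) m l)) ^ 2 *
            PQLnorm χ (2 ^ n) (2 ^ m) (2 ^ l) w ^ 2 := by
        rw [lintegral_const_mul' _ _ ENNReal.ofReal_ne_top, tsum_pieces hχ _ w hw]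
    _ ≤ _ := by
        rw [Xtnorm_sq]
        gcongr with n m
        simp_rw [← mul_pow]
        exact tsum_sq_le

/-! ### One-dimensional integrals -/

lemma japanese_lintegral {ε : ℝ} (hε : 0 < ε) :
    ∫⁻ x : ℝ, ENNReal.ofReal ((1 + |x|) ^ (-(1 + ε))) ≠ ⊤ := by
  have h := integrable_one_add_norm (μ := (volume : Measure ℝ)) (r := 1 + ε) (by simp [hε])
  simp only [Real.norm_eq_abs] at h
  have := h.lintegral_lt_top
  exact this.ne

lemma lintegral_rpow_Ioc {p R : ℝ} (hp : -1 < p) (hR : 0 ≤ R) :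
    ∫⁻ x in Set.Ioc 0 R, ENNReal.ofReal (x ^ p) = ENNReal.ofReal (R ^ (p + 1) / (p + 1)) := by
  have hi : IntervalIntegrable (fun x : ℝ => x ^ p) volume 0 R :=
    intervalIntegral.intervalIntegrable_rpow' hp
  rw [← ofReal_integral_eq_lintegral_ofReal, ← intervalIntegral.integral_of_le hR,
    integral_rpow (Or.inl hp), Real.zero_rpow (by linarith), sub_zero]
  · exact (intervalIntegrable_iff_integrableOn_Ioc_of_le hR).1 hi
  · refine (ae_restrict_iff' measurableSet_Ioc).2 (Filter.Eventually.of_forall fun x hx => ?_)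
    exact Real.rpow_nonneg hx.1.le _

lemma lintegral_abs_rpow_le {p R : ℝ} (hp : -1 < p) (hp0 : p ≠ 0) (hR : 0 ≤ R) :
    ∫⁻ x : ℝ, ENNReal.ofReal (if |x| ≤ R then |x| ^ p else 0) ≤
      ENNReal.ofReal (2 * (R ^ (p + 1) / (p + 1))) := by
  have hm : Measurable fun x : ℝ => ENNReal.ofReal ((Set.Ioc 0 R).indicator (fun x => x ^ p) x) := by
    refine Measurable.ennreal_ofReal (Measurable.indicator ?_ measurableSet_Ioc)
    exact measurable_id.pow_const _
  have h0 : ∫⁻ x : ℝ, ENNReal.ofReal ((Set.Ioc 0 R).indicator (fun x => x ^ p) x) =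
      ENNReal.ofReal (R ^ (p + 1) / (p + 1)) := by
    rw [← lintegral_rpow_Ioc hp hR, ← lintegral_indicator measurableSet_Ioc]
    refine lintegral_congr fun x => ?_
    by_cases hx : x ∈ Set.Ioc 0 R <;> simp [hx]
  have h1 : ∫⁻ x : ℝ, ENNReal.ofReal ((Set.Ioc 0 R).indicator (fun x => x ^ p) (-x)) =
      ENNReal.ofReal (R ^ (p + 1) / (p + 1)) := by
    rw [← h0]
    exact lintegral_neg_eq_self
      (fun x : ℝ => ENNReal.ofReal ((Set.Ioc 0 R).indicator (fun x => x ^ p) x))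
  rw [two_mul, ENNReal.ofReal_add, ← h1]
  · nth_rewrite 1 [h1, ← h0]
    rw [← lintegral_add_left hm]
    refine lintegral_mono fun x => ?_
    split_ifs with hx
    · rcases lt_trichotomy x 0 with h | h | h
      · rw [abs_of_neg h] at hx ⊢
        have : -x ∈ Set.Ioc 0 R := ⟨by linarith, hx⟩
        rw [Set.indicator_of_mem this]
        exact le_add_self
      · simp [h, Real.zero_rpow hp0]
      · rw [abs_of_pos h] at hx ⊢
        have : x ∈ Set.Ioc 0 R := ⟨by linarith, hx⟩
        rw [Set.indicator_of_mem this]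
        exact le_self_add
    · simp
  all_goals
    have : 0 < p + 1 := by linarith
    positivity

/-- The kernel `k(x) = (1 + |x|)^{-1-ε} + 1_{|x| ≤ 1} |x|^{-ε}` absorbing the modulations. -/
def kf (ε x : ℝ) : ℝ := (1 + |x|) ^ (-(1 + ε)) + if |x| ≤ 1 then |x| ^ (-ε) else 0

lemma kf_nonneg (ε x : ℝ) : 0 ≤ kf ε x := by
  unfold kf
  split_ifs <;> positivity

lemma kf_measurable (ε : ℝ) : Measurable (kf ε) := by
  unfold kf
  refine Measurable.add (by fun_prop) (Measurable.ite ?_ (by fun_prop) measurable_const)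
  exact measurableSet_le (by fun_prop) measurable_const

lemma kf_lintegral {ε : ℝ} (hε : 0 < ε) (hε1 : ε < 1) :
    ∫⁻ x : ℝ, ENNReal.ofReal (kf ε x) ≠ ⊤ := by
  unfold kf
  refine ne_top_of_le_ne_top ?_ (lintegral_mono fun x => ENNReal.ofReal_add_le)
  rw [lintegral_add_left (Measurable.ennreal_ofReal (by fun_prop))]
  refine ENNReal.add_ne_top.2 ⟨japanese_lintegral hε, ?_⟩
  exact ne_top_of_le_ne_top ENNReal.ofReal_ne_top
    (lintegral_abs_rpow_le (by linarith) (by linarith) zero_le_one)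

lemma lintegral_one_add_rpow {p κ : ℝ} (hp : 1 < p) (hκ : 0 < κ) (hpk : 1 < p * κ) :
    ∫⁻ x : ℝ, ENNReal.ofReal ((1 + |x| ^ p) ^ (-κ)) ≠ ⊤ := by
  have h := japanese_lintegral (ε := p * κ - 1) (by linarith)
  refine ne_top_of_le_ne_top
    (ENNReal.mul_ne_top (ENNReal.ofReal_ne_top (r := 2 ^ (p * κ))) h) ?_
  rw [← lintegral_const_mul' _ _ ENNReal.ofReal_ne_top]
  refine lintegral_mono fun x => ?_
  rw [← ENNReal.ofReal_mul (by positivity)]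
  refine ENNReal.ofReal_le_ofReal ?_
  have hx := abs_nonneg x
  have key : ((1 + |x|) / 2) ^ p ≤ 1 + |x| ^ p := by
    rcases le_total |x| 1 with h1 | h1
    · have : ((1 + |x|) / 2) ^ p ≤ 1 :=
        Real.rpow_le_one (by positivity) (by linarith) (by linarith)
      have : 0 ≤ |x| ^ p := by positivity
      linarith
    · have : ((1 + |x|) / 2) ^ p ≤ |x| ^ p :=
        Real.rpow_le_rpow (by positivity) (by linarith) (by linarith)
      linarith
  calc (1 + |x| ^ p) ^ (-κ) ≤ (((1 + |x|) / 2) ^ p) ^ (-κ) :=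
        Real.rpow_le_rpow_of_nonpos (by positivity) key (by linarith)
    _ = 2 ^ (p * κ) * (1 + |x|) ^ (-(1 + (p * κ - 1))) := by
        rw [← Real.rpow_mul (by positivity), Real.div_rpow (by positivity) (by norm_num),
          show p * -κ = -(p * κ) by ring, Real.rpow_neg (by norm_num : (0 : ℝ) ≤ 2), div_inv_eq_mul,
          mul_comm]
        congr 2
        ring

lemma lintegral_scale {p κ A B : ℝ} (hp : 0 < p) (hA : 0 < A) (hB : 0 < B) (c : ℝ) :
    ∫⁻ x : ℝ, ENNReal.ofReal ((A + B * |x - c| ^ p) ^ (-κ)) =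
      ENNReal.ofReal (B ^ (-(1 / p)) * A ^ (1 / p - κ)) *
        ∫⁻ x : ℝ, ENNReal.ofReal ((1 + |x| ^ p) ^ (-κ)) := by
  rw [lintegral_sub_right_eq_self (fun x : ℝ => ENNReal.ofReal ((A + B * |x| ^ p) ^ (-κ))) c]
  set r : ℝ := (A / B) ^ (1 / p) with hr
  have hrp : 0 < r := by positivity
  have hrpow : r ^ p = A / B := by
    rw [hr, ← Real.rpow_mul (by positivity)]
    simp [hp.ne']
  have hm : Measurable fun x : ℝ => ENNReal.ofReal ((A + B * |x| ^ p) ^ (-κ)) :=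
    Measurable.ennreal_ofReal (by fun_prop)
  have e1 : ∫⁻ x : ℝ, ENNReal.ofReal ((A + B * |r * x| ^ p) ^ (-κ)) =
      ENNReal.ofReal r⁻¹ * ∫⁻ x : ℝ, ENNReal.ofReal ((A + B * |x| ^ p) ^ (-κ)) := by
    rw [← lintegral_map hm (measurable_const_mul r), Real.map_volume_mul_left hrp.ne',
      lintegral_smul_measure, smul_eq_mul, abs_of_pos (by positivity)]
  have e2 : ∀ x : ℝ, (A + B * |r * x| ^ p) ^ (-κ) = A ^ (-κ) * (1 + |x| ^ p) ^ (-κ) := by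
    intro x
    rw [abs_mul, abs_of_pos hrp, Real.mul_rpow hrp.le (abs_nonneg x), hrpow,
      ← Real.mul_rpow hA.le (by positivity)]
    congr 1
    field_simp
  have e3 : ∫⁻ x : ℝ, ENNReal.ofReal ((A + B * |x| ^ p) ^ (-κ)) = ENNReal.ofReal r *
      ∫⁻ x : ℝ, ENNReal.ofReal ((A + B * |r * x| ^ p) ^ (-κ)) := by
    rw [e1, ← mul_assoc, ← ENNReal.ofReal_mul hrp.le, mul_inv_cancel₀ hrp.ne']
    simp
  rw [e3]
  simp_rw [e2, ENNReal.ofReal_mul (show 0 ≤ A ^ (-κ) by positivity)]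
  rw [lintegral_const_mul' _ _ ENNReal.ofReal_ne_top, ← mul_assoc, ← ENNReal.ofReal_mul hrp.le]
  congr 2
  rw [hr, Real.div_rpow hA.le hB.le, Real.rpow_sub hA, Real.rpow_neg hB.le, Real.rpow_neg hA.le]
  field_simp

/-- Integral of a power of a quadratic resonance away from its critical point. The exponent `p`
interpolates between the behaviour at the critical point (`p = 2`) and far away from it
(`p = 1`). -/
lemma lintegral_quadratic {p κ : ℝ} (hp : 1 < p) (hp2 : p ≤ 2) (hκ : 0 < κ) (hpk : 1 < p * κ) :
    ∃ C : ℝ≥0∞, C ≠ ⊤ ∧ ∀ q A x0 n c : ℝ, 0 < q → 0 < A → 0 ≤ x0 → (0 < x0 ∨ p = 2) →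
      ∫⁻ x : ℝ, ENNReal.ofReal (if x0 ≤ |x - c| then (A + q * |(x - c) ^ 2 - n|) ^ (-κ) else 0) ≤
        C * ENNReal.ofReal ((q * x0 ^ (2 - p)) ^ (-(1 / p)) * A ^ (1 / p - κ)) := by
  refine ⟨2 * ∫⁻ x : ℝ, ENNReal.ofReal ((1 + |x| ^ p) ^ (-κ)),
    ENNReal.mul_ne_top (by norm_num) (lintegral_one_add_rpow hp hκ hpk), ?_⟩
  intro q A x0 n c hq hA hx0 hx0p
  have hX : 0 < x0 ^ (2 - p) := by
    rcases hx0p with h | h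
    · positivity
    · simp [h]
  set B := q * x0 ^ (2 - p) with hB
  have hBp : 0 < B := by positivity
  set n0 := Real.sqrt (max n 0) with hn0
  have hn0n : 0 ≤ n0 := Real.sqrt_nonneg _
  have hn0sq : n0 ^ 2 = max n 0 := Real.sq_sqrt (le_max_right _ _)
  -- lower bound for the quadratic when `z` lies on the side of the root `n0`
  have hroot : ∀ z : ℝ, 0 ≤ z → x0 ≤ z → x0 ^ (2 - p) * |z - n0| ^ p ≤ |z ^ 2 - n| := by
    intro z hz hxz
    have h1 : |z ^ 2 - n0 ^ 2| ≤ |z ^ 2 - n| := by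
      rw [hn0sq]
      rcases le_total n 0 with h | h
      · rw [max_eq_right h, sub_zero, abs_of_nonneg (sq_nonneg z)]
        exact le_trans (by linarith) (le_abs_self _)
      · rw [max_eq_left h]
    refine le_trans ?_ h1
    have e : |z ^ 2 - n0 ^ 2| = (z + n0) * |z - n0| := by
      rw [show z ^ 2 - n0 ^ 2 = (z + n0) * (z - n0) by ring, abs_mul,
        abs_of_nonneg (by linarith : 0 ≤ z + n0)]
    rw [e]
    rcases eq_or_ne z n0 with hzn | hzn
    · rw [hzn]; simp [(by linarith : p ≠ 0)]
    have hd : 0 < |z - n0| := abs_pos.2 (sub_ne_zero.2 hzn)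
    have hs : |z - n0| ≤ z + n0 := by rw [abs_le]; constructor <;> linarith
    have hs0 : 0 < z + n0 := by linarith
    calc x0 ^ (2 - p) * |z - n0| ^ p = x0 ^ (2 - p) * |z - n0| ^ (p - 1) * |z - n0| := by
          rw [mul_assoc, ← Real.rpow_add_one hd.ne']; simp
      _ ≤ (z + n0) ^ (2 - p) * (z + n0) ^ (p - 1) * |z - n0| := by
          gcongr
          linarith
      _ = (z + n0) * |z - n0| := by
          rw [← Real.rpow_add hs0, show 2 - p + (p - 1) = 1 by ring, Real.rpow_one]
  have hpt : ∀ x : ℝ, ENNReal.ofReal (if x0 ≤ |x - c| then (A + q * |(x - c) ^ 2 - n|) ^ (-κ) else 0)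
      ≤ ENNReal.ofReal ((A + B * |x - (c + n0)| ^ p) ^ (-κ)) +
        ENNReal.ofReal ((A + B * |x - (c - n0)| ^ p) ^ (-κ)) := by
    intro x
    split_ifs with hx
    · rcases le_total 0 (x - c) with h | h
      · rw [abs_of_nonneg h] at hx
        refine le_trans (ENNReal.ofReal_le_ofReal ?_) le_self_add
        refine Real.rpow_le_rpow_of_nonpos (by positivity) ?_ (by linarith)
        rw [hB, mul_assoc, show x - (c + n0) = x - c - n0 by ring]
        have := hroot _ h hx
        gcongr
      · rw [abs_of_nonpos h] at hx
        refine le_trans (ENNReal.ofReal_le_ofReal ?_) le_add_self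
        refine Real.rpow_le_rpow_of_nonpos (by positivity) ?_ (by linarith)
        have := hroot (-(x - c)) (by linarith) hx
        rw [neg_sq, show -(x - c) - n0 = -(x - (c - n0)) by ring, abs_neg] at this
        rw [hB, mul_assoc]
        gcongr
    · simp
  calc _ ≤ ∫⁻ x : ℝ, (ENNReal.ofReal ((A + B * |x - (c + n0)| ^ p) ^ (-κ)) +
        ENNReal.ofReal ((A + B * |x - (c - n0)| ^ p) ^ (-κ))) := lintegral_mono hpt
    _ = _ := by
        rw [lintegral_add_left (Measurable.ennreal_ofReal (by fun_prop)),
          lintegral_scale (by linarith) hA hBp, lintegral_scale (by linarith) hA hBp]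
        ring

/-! ### The majorant of the kernel and its marginals -/

/-- The resonance part of the majorant. Here `y` and `m` are the size of the frozen frequency and
the smaller of the two others, `T = |σ_b + σ_c|`, and `D` is the square of
`ζ_b ω_b - ζ_c ω_c`. The three summands correspond to a large frozen modulation, a large free
modulation, and a large transversality `D`. -/
def core (ε y m T D : ℝ) : ℝ :=
  ((1 + y) ^ 2 + m * y ^ 2) ^ (-(1 / 2) : ℝ) * (1 + y) ^ (-1 + 2 * ε) *
      ((1 + y) ^ 2 + T) ^ (-(1 - 3 * ε)) +
    (1 + y) ^ (-2 + 2 * ε) * ((1 + y) ^ 2 + m * y ^ 2 + T) ^ (-(1 - 3 * ε)) +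
    (1 + y) ^ (-2 + 2 * ε) * (if m * y ^ 3 ≤ 200 * D then ((1 + y) ^ 2 + T) ^ (-(1 - 3 * ε)) else 0)

lemma core_nonneg {ε y m T D : ℝ} (hy : 0 ≤ y) (hm : 0 ≤ m) (hT : 0 ≤ T) : 0 ≤ core ε y m T D := by
  unfold core
  split_ifs <;> positivity

section RealBounds

variable {ε y m : ℝ}

/-- The common bound for the integrals of the three summands of `core`. -/
def coreBd (ε y m : ℝ) : ℝ :=
  y ^ (-(3 / 2) : ℝ) * (1 + m) ^ (-(1 / 2) : ℝ) * (1 + y) ^ (-2 + 14 * ε)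

lemma A2_rpow_le (hy : 0 < y) (hm : 0 ≤ m) :
    ((1 + y) ^ 2 + m * y ^ 2) ^ (-(1 / 2) : ℝ) ≤ y ^ (-1 : ℝ) * (1 + m) ^ (-(1 / 2) : ℝ) := by
  calc ((1 + y) ^ 2 + m * y ^ 2) ^ (-(1 / 2) : ℝ) ≤ (y ^ 2 * (1 + m)) ^ (-(1 / 2) : ℝ) :=
        Real.rpow_le_rpow_of_nonpos (by positivity) (by nlinarith) (by norm_num)
    _ = _ := by
        rw [Real.mul_rpow (by positivity) (by positivity), ← Real.rpow_natCast, ← Real.rpow_mul hy.le]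
        norm_num

lemma sq_rpow_eq (hy : 0 < y) (p : ℝ) : ((1 + y) ^ 2) ^ p = (1 + y) ^ (2 * p) := by
  rw [← Real.rpow_natCast, ← Real.rpow_mul (by positivity)]
  norm_num

lemma two_rpow_le_two {p : ℝ} (hp : p ≤ 1) : (2 : ℝ) ^ p ≤ 2 := by
  calc (2 : ℝ) ^ p ≤ 2 ^ (1 : ℝ) := Real.rpow_le_rpow_of_exponent_le (by norm_num) hp
    _ = 2 := by norm_num

lemma core_bd1 (hε : 0 < ε) (hy : 0 < y) (hm : 0 ≤ m) :
    ((1 + y) ^ 2 + m * y ^ 2) ^ (-(1 / 2) : ℝ) * (1 + y) ^ (-1 + 2 * ε) *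
      (y ^ (-(1 / 2) : ℝ) * ((1 + y) ^ 2) ^ (1 / 2 - (1 - 3 * ε))) ≤ coreBd ε y m := by
  have hY : 0 < 1 + y := by linarith
  rw [sq_rpow_eq hy]
  calc _ ≤ y ^ (-1 : ℝ) * (1 + m) ^ (-(1 / 2) : ℝ) * (1 + y) ^ (-1 + 2 * ε) *
        (y ^ (-(1 / 2) : ℝ) * (1 + y) ^ (2 * (1 / 2 - (1 - 3 * ε)))) := by
        gcongr
        exact A2_rpow_le hy hm
    _ = (y ^ (-1 : ℝ) * y ^ (-(1 / 2) : ℝ)) * (1 + m) ^ (-(1 / 2) : ℝ) *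
        ((1 + y) ^ (-1 + 2 * ε) * (1 + y) ^ (2 * (1 / 2 - (1 - 3 * ε)))) := by ring
    _ = y ^ (-(3 / 2) : ℝ) * (1 + m) ^ (-(1 / 2) : ℝ) * (1 + y) ^ (-2 + 8 * ε) := by
        rw [← Real.rpow_add hy, ← Real.rpow_add hY]
        congr 2
        · norm_num
        · ring
    _ ≤ _ := by
        unfold coreBd
        gcongr 2
        · linarith
        · linarith

lemma core_bd2 (hε : 0 < ε) (hε1 : ε ≤ 1 / 20) (hy : 0 < y) (hm : 0 ≤ m) (hmy : m ≤ 2 * y) :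
    (1 + y) ^ (-2 + 2 * ε) * (y ^ (-(1 / 2) : ℝ) *
      ((1 + y) ^ 2 + m * y ^ 2) ^ (1 / 2 - (1 - 3 * ε))) ≤ 2 * coreBd ε y m := by
  have hY : 0 < 1 + y := by linarith
  have hA : 0 < (1 + y) ^ 2 + m * y ^ 2 := by positivity
  have hA3 : ((1 + y) ^ 2 + m * y ^ 2) ^ (3 * ε) ≤ 2 * (1 + y) ^ (9 * ε) := by
    calc _ ≤ (2 * (1 + y) ^ 3) ^ (3 * ε) := by
          gcongr
          nlinarith [pow_pos hy 3, pow_pos hy 2, mul_le_mul_of_nonneg_right hmy (sq_nonneg y)]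
      _ = 2 ^ (3 * ε) * (1 + y) ^ (9 * ε) := by
          rw [Real.mul_rpow (by norm_num) (by positivity), ← Real.rpow_natCast,
            ← Real.rpow_mul hY.le]
          congr 2
          push_cast; ring
      _ ≤ _ := by
          gcongr
          exact two_rpow_le_two (by linarith)
  have e : (1 / 2 - (1 - 3 * ε)) = -(1 / 2) + 3 * ε := by ring
  rw [e, Real.rpow_add hA]
  calc _ ≤ (1 + y) ^ (-2 + 2 * ε) * (y ^ (-(1 / 2) : ℝ) *
        ((y ^ (-1 : ℝ) * (1 + m) ^ (-(1 / 2) : ℝ)) * (2 * (1 + y) ^ (9 * ε)))) := by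
        gcongr
        exact A2_rpow_le hy hm
    _ = 2 * ((y ^ (-1 : ℝ) * y ^ (-(1 / 2) : ℝ)) * (1 + m) ^ (-(1 / 2) : ℝ) *
        ((1 + y) ^ (-2 + 2 * ε) * (1 + y) ^ (9 * ε))) := by ring
    _ = 2 * (y ^ (-(3 / 2) : ℝ) * (1 + m) ^ (-(1 / 2) : ℝ) * (1 + y) ^ (-2 + 11 * ε)) := by
        rw [← Real.rpow_add hy, ← Real.rpow_add hY]
        congr 3
        · norm_num
        · ring
    _ ≤ _ := by
        unfold coreBd
        gcongr 3
        · linarith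
        · linarith

lemma core_bd3 (hε : 0 < ε) (hy : 0 < y) (hm : 0 ≤ m) (hm1 : m ≤ 1) :
    (1 + y) ^ (-2 + 2 * ε) * (y ^ (-(1 / 2) : ℝ) *
      ((1 + y) ^ 2) ^ (1 / 2 - (1 - 3 * ε))) ≤ 2 * coreBd ε y m := by
  have hY : 0 < 1 + y := by linarith
  rw [sq_rpow_eq hy]
  have h1 : y ^ (-(1 / 2) : ℝ) ≤ y ^ (-(3 / 2) : ℝ) * (1 + y) := by
    calc y ^ (-(1 / 2) : ℝ) = y ^ (-(3 / 2) : ℝ) * y := by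
          rw [← Real.rpow_add_one hy.ne']; norm_num
      _ ≤ _ := by gcongr; linarith
  have h2 : 1 ≤ 2 * (1 + m) ^ (-(1 / 2) : ℝ) := by
    have : (1 + m) ^ (-1 : ℝ) ≤ (1 + m) ^ (-(1 / 2) : ℝ) :=
      Real.rpow_le_rpow_of_exponent_le (by linarith) (by norm_num)
    have h3 : 1 / 2 ≤ (1 + m) ^ (-1 : ℝ) := by
      rw [Real.rpow_neg_one, ← one_div]
      exact one_div_le_one_div_of_le (by linarith) (by linarith)
    linarith
  calc _ ≤ (1 + y) ^ (-2 + 2 * ε) * ((y ^ (-(3 / 2) : ℝ) * (1 + y)) *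
        (1 + y) ^ (2 * (1 / 2 - (1 - 3 * ε)))) * 1 := by
        rw [mul_one]
        gcongr
    _ ≤ (1 + y) ^ (-2 + 2 * ε) * ((y ^ (-(3 / 2) : ℝ) * (1 + y)) *
        (1 + y) ^ (2 * (1 / 2 - (1 - 3 * ε)))) * (2 * (1 + m) ^ (-(1 / 2) : ℝ)) := by
        gcongr
    _ = 2 * (y ^ (-(3 / 2) : ℝ) * (1 + m) ^ (-(1 / 2) : ℝ) * ((1 + y) ^ (-2 + 2 * ε) *
        ((1 + y) ^ (2 * (1 / 2 - (1 - 3 * ε))) * (1 + y)))) := by ring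
    _ = 2 * (y ^ (-(3 / 2) : ℝ) * (1 + m) ^ (-(1 / 2) : ℝ) * (1 + y) ^ (-2 + 8 * ε)) := by
        rw [← Real.rpow_add_one hY.ne', ← Real.rpow_add hY]
        congr 3
        ring
    _ ≤ _ := by
        unfold coreBd
        gcongr 3
        · linarith
        · linarith

lemma core_bd4 (hε : 0 < ε) (hε1 : ε ≤ 1 / 20) (hy : 0 < y) (hm1 : 1 ≤ m) (hmy : m ≤ 2 * y) :
    (1 + y) ^ (-2 + 2 * ε) * ((3 * y * (Real.sqrt (m * y / 800)) ^ (2 - 1 / (1 - 4 * ε))) ^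
      (-(1 / (1 / (1 - 4 * ε)))) * ((1 + y) ^ 2) ^ (1 / (1 / (1 - 4 * ε)) - (1 - 3 * ε))) ≤
      3200 * coreBd ε y m := by
  have hY : 0 < 1 + y := by linarith
  have hm : 0 < m := by linarith
  have h4 : 0 < 1 - 4 * ε := by linarith
  rw [one_div_one_div, sq_rpow_eq hy, Real.sqrt_eq_rpow, ← Real.rpow_mul (by positivity),
    Real.mul_rpow (by positivity) (by positivity), ← Real.rpow_mul (by positivity)]
  have ee : (1 : ℝ) / 2 * (2 - 1 / (1 - 4 * ε)) * -(1 - 4 * ε) = -(1 / 2) + 4 * ε := by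
    field_simp; ring
  rw [ee]
  have h1 : (3 * y) ^ (-(1 - 4 * ε)) ≤ y ^ (-1 + 4 * ε) := by
    rw [show -1 + 4 * ε = -(1 - 4 * ε) by ring]
    exact Real.rpow_le_rpow_of_nonpos hy (by linarith) (by linarith)
  have h2 : (m * y / 800) ^ (-(1 / 2) + 4 * ε) ≤
      800 * (m ^ (-(1 / 2) + 4 * ε) * y ^ (-(1 / 2) + 4 * ε)) := by
    rw [Real.div_rpow (by positivity) (by norm_num), Real.mul_rpow hm.le hy.le, div_eq_mul_inv,
      mul_comm]
    gcongr
    rw [← Real.rpow_neg (by norm_num)]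
    calc (800 : ℝ) ^ (-(-(1 / 2) + 4 * ε)) ≤ 800 ^ (1 : ℝ) :=
          Real.rpow_le_rpow_of_exponent_le (by norm_num) (by linarith)
      _ = 800 := by norm_num
  have h3 : m ^ (-(1 / 2) + 4 * ε) ≤ 4 * ((1 + m) ^ (-(1 / 2) : ℝ) * (1 + y) ^ (4 * ε)) := by
    rw [Real.rpow_add hm]
    have a1 : m ^ (-(1 / 2) : ℝ) ≤ 2 * (1 + m) ^ (-(1 / 2) : ℝ) := by
      calc m ^ (-(1 / 2) : ℝ) ≤ ((1 + m) / 2) ^ (-(1 / 2) : ℝ) :=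
            Real.rpow_le_rpow_of_nonpos (by positivity) (by linarith) (by norm_num)
        _ = 2 ^ (1 / 2 : ℝ) * (1 + m) ^ (-(1 / 2) : ℝ) := by
            rw [Real.div_rpow (by positivity) (by norm_num), Real.rpow_neg (by norm_num : (0 : ℝ) ≤ 2),
              div_inv_eq_mul, mul_comm]
        _ ≤ _ := by gcongr; exact two_rpow_le_two (by norm_num)
    have a2 : m ^ (4 * ε) ≤ 2 * (1 + y) ^ (4 * ε) := by
      calc m ^ (4 * ε) ≤ (2 * (1 + y)) ^ (4 * ε) := by gcongr; linarith
        _ = 2 ^ (4 * ε) * (1 + y) ^ (4 * ε) := Real.mul_rpow (by norm_num) hY.le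
        _ ≤ _ := by gcongr; exact two_rpow_le_two (by linarith)
    calc _ ≤ (2 * (1 + m) ^ (-(1 / 2) : ℝ)) * (2 * (1 + y) ^ (4 * ε)) := by gcongr
      _ = _ := by ring
  have h5 : y ^ (8 * ε) ≤ (1 + y) ^ (8 * ε) := by gcongr; linarith
  calc _ ≤ (1 + y) ^ (-2 + 2 * ε) * (y ^ (-1 + 4 * ε) *
        (800 * (4 * ((1 + m) ^ (-(1 / 2) : ℝ) * (1 + y) ^ (4 * ε)) * y ^ (-(1 / 2) + 4 * ε))) *
        (1 + y) ^ (2 * (1 - 4 * ε - (1 - 3 * ε)))) := by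
        have := h2.trans (show _ ≤ 800 * (4 * ((1 + m) ^ (-(1 / 2) : ℝ) * (1 + y) ^ (4 * ε)) *
          y ^ (-(1 / 2) + 4 * ε)) by gcongr)
        gcongr
    _ = 3200 * ((1 + m) ^ (-(1 / 2) : ℝ) * (y ^ (-1 + 4 * ε) * y ^ (-(1 / 2) + 4 * ε)) *
        ((1 + y) ^ (-2 + 2 * ε) * (1 + y) ^ (4 * ε) *
          (1 + y) ^ (2 * (1 - 4 * ε - (1 - 3 * ε))))) := by ring
    _ = 3200 * ((1 + m) ^ (-(1 / 2) : ℝ) * (y ^ (-(3 / 2) : ℝ) * y ^ (8 * ε)) *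
        (1 + y) ^ (-2 + 4 * ε)) := by
        rw [← Real.rpow_add hy, ← Real.rpow_add hY, ← Real.rpow_add hY, ← Real.rpow_add hy]
        congr 3
        · congr 1; ring
        · ring
    _ ≤ 3200 * ((1 + m) ^ (-(1 / 2) : ℝ) * (y ^ (-(3 / 2) : ℝ) * (1 + y) ^ (8 * ε)) *
        (1 + y) ^ (-2 + 4 * ε)) := by gcongr
    _ = 3200 * (y ^ (-(3 / 2) : ℝ) * (1 + m) ^ (-(1 / 2) : ℝ) *
        ((1 + y) ^ (8 * ε) * (1 + y) ^ (-2 + 4 * ε))) := by ring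
    _ ≤ _ := by
        unfold coreBd
        rw [← Real.rpow_add hY]
        gcongr 3
        · linarith
        · linarith

end RealBounds

lemma core_lintegral {ε : ℝ} (hε : 0 < ε) (hε1 : ε ≤ 1 / 20) :
    ∃ C : ℝ≥0∞, C ≠ ⊤ ∧ ∀ y m c n : ℝ, 0 < y → 0 ≤ m → m ≤ 2 * y →
      ∫⁻ x : ℝ, ENNReal.ofReal (core ε y m (3 * y * |(x - c) ^ 2 - n|) (4 * y ^ 2 * (x - c) ^ 2)) ≤
        C * ENNReal.ofReal (coreBd ε y m) := by
  have h4 : 0 < 1 - 4 * ε := by linarith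
  have hp1 : 1 < 1 / (1 - 4 * ε) := by rw [lt_div_iff₀ h4]; linarith
  have hp2 : 1 / (1 - 4 * ε) ≤ 2 := by rw [div_le_iff₀ h4]; linarith
  have hpk : 1 < 1 / (1 - 4 * ε) * (1 - 3 * ε) := by
    rw [div_mul_eq_mul_div, lt_div_iff₀ h4]; linarith
  obtain ⟨C2, hC2, hq2⟩ := lintegral_quadratic (p := 2) (κ := 1 - 3 * ε) (by norm_num) le_rfl
    (by linarith) (by linarith)
  obtain ⟨Cp, hCp, hqp⟩ := lintegral_quadratic (p := 1 / (1 - 4 * ε)) (κ := 1 - 3 * ε) hp1 hp2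
    (by linarith) hpk
  refine ⟨C2 + 2 * C2 + (2 * C2 + 3200 * Cp), ?_, ?_⟩
  · finiteness
  intro y m c n hy hm hmy
  have hY : 0 < 1 + y := by linarith
  have quad : ∀ A : ℝ, 0 < A →
      ∫⁻ x : ℝ, ENNReal.ofReal ((A + 3 * y * |(x - c) ^ 2 - n|) ^ (-(1 - 3 * ε))) ≤
        C2 * ENNReal.ofReal (y ^ (-(1 / 2) : ℝ) * A ^ (1 / 2 - (1 - 3 * ε))) := by
    intro A hA
    have := hq2 (3 * y) A 0 n c (by linarith) hA le_rfl (Or.inr rfl)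
    simp only [abs_nonneg, if_true, sub_self, Real.rpow_zero, mul_one] at this
    refine this.trans ?_
    have hb : (3 * y) ^ (-(1 / 2) : ℝ) ≤ y ^ (-(1 / 2) : ℝ) :=
      Real.rpow_le_rpow_of_nonpos hy (by linarith) (by norm_num)
    gcongr C2 * ENNReal.ofReal (?_ * _)
  have mA : ∀ A : ℝ, Measurable fun x : ℝ =>
      ENNReal.ofReal ((A + 3 * y * |(x - c) ^ 2 - n|) ^ (-(1 - 3 * ε))) := fun A =>
    Measurable.ennreal_ofReal (by fun_prop)
  set α1 := ((1 + y) ^ 2 + m * y ^ 2) ^ (-(1 / 2) : ℝ) * (1 + y) ^ (-1 + 2 * ε) with hα1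
  set α2 := (1 + y) ^ (-2 + 2 * ε) with hα2
  have hα1p : 0 ≤ α1 := by positivity
  have hα2p : 0 ≤ α2 := by positivity
  set F3 : ℝ → ℝ := fun x => if m * y ^ 3 ≤ 200 * (4 * y ^ 2 * (x - c) ^ 2) then
    ((1 + y) ^ 2 + 3 * y * |(x - c) ^ 2 - n|) ^ (-(1 - 3 * ε)) else 0 with hF3
  have hsplit : ∫⁻ x : ℝ, ENNReal.ofReal
      (core ε y m (3 * y * |(x - c) ^ 2 - n|) (4 * y ^ 2 * (x - c) ^ 2)) ≤
      ENNReal.ofReal α1 * (∫⁻ x : ℝ, ENNReal.ofReal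
        (((1 + y) ^ 2 + 3 * y * |(x - c) ^ 2 - n|) ^ (-(1 - 3 * ε)))) +
      ENNReal.ofReal α2 * (∫⁻ x : ℝ, ENNReal.ofReal
        (((1 + y) ^ 2 + m * y ^ 2 + 3 * y * |(x - c) ^ 2 - n|) ^ (-(1 - 3 * ε)))) +
      ENNReal.ofReal α2 * ∫⁻ x : ℝ, ENNReal.ofReal (F3 x) := by
    have hm12 : Measurable fun x : ℝ =>
        ENNReal.ofReal α1 * ENNReal.ofReal
          (((1 + y) ^ 2 + 3 * y * |(x - c) ^ 2 - n|) ^ (-(1 - 3 * ε))) +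
        ENNReal.ofReal α2 * ENNReal.ofReal
          (((1 + y) ^ 2 + m * y ^ 2 + 3 * y * |(x - c) ^ 2 - n|) ^ (-(1 - 3 * ε))) :=
      ((mA _).const_mul _).add ((mA _).const_mul _)
    rw [← lintegral_const_mul _ (mA _), ← lintegral_const_mul _ (mA _),
      ← lintegral_const_mul' _ _ ENNReal.ofReal_ne_top, ← lintegral_add_left ((mA _).const_mul _),
      ← lintegral_add_left hm12]
    refine lintegral_mono fun x => ?_
    rw [← ENNReal.ofReal_mul hα1p, ← ENNReal.ofReal_mul hα2p, ← ENNReal.ofReal_mul hα2p]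
    refine ENNReal.ofReal_add_le.trans ?_
    gcongr
    exact ENNReal.ofReal_add_le
  refine hsplit.trans ?_
  rw [add_mul, add_mul]
  have i1 := quad ((1 + y) ^ 2) (by positivity)
  have i2 := quad ((1 + y) ^ 2 + m * y ^ 2) (by positivity)
  gcongr ?_ + ?_ + ?_
  · calc _ ≤ ENNReal.ofReal α1 * (C2 * ENNReal.ofReal (y ^ (-(1 / 2) : ℝ) *
          ((1 + y) ^ 2) ^ (1 / 2 - (1 - 3 * ε)))) := by gcongr
      _ = C2 * ENNReal.ofReal (α1 * (y ^ (-(1 / 2) : ℝ) *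
          ((1 + y) ^ 2) ^ (1 / 2 - (1 - 3 * ε)))) := by
          rw [ENNReal.ofReal_mul hα1p]; ring
      _ ≤ _ := by gcongr C2 * ENNReal.ofReal ?_; exact core_bd1 hε hy hm
  · calc _ ≤ ENNReal.ofReal α2 * (C2 * ENNReal.ofReal (y ^ (-(1 / 2) : ℝ) *
          ((1 + y) ^ 2 + m * y ^ 2) ^ (1 / 2 - (1 - 3 * ε)))) := by gcongr
      _ = C2 * ENNReal.ofReal (α2 * (y ^ (-(1 / 2) : ℝ) *
          ((1 + y) ^ 2 + m * y ^ 2) ^ (1 / 2 - (1 - 3 * ε)))) := by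
          rw [ENNReal.ofReal_mul hα2p]; ring
      _ ≤ C2 * ENNReal.ofReal (2 * coreBd ε y m) := by
          gcongr C2 * ENNReal.ofReal ?_; exact core_bd2 hε hε1 hy hm hmy
      _ = _ := by rw [ENNReal.ofReal_mul (by norm_num)]; norm_num; ring
  · rw [add_mul]
    rcases le_total m 1 with hm1 | hm1
    · refine le_trans ?_ le_self_add
      calc _ ≤ ENNReal.ofReal α2 * (C2 * ENNReal.ofReal (y ^ (-(1 / 2) : ℝ) *
            ((1 + y) ^ 2) ^ (1 / 2 - (1 - 3 * ε)))) := by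
            gcongr
            refine le_trans (lintegral_mono fun x => ENNReal.ofReal_le_ofReal ?_) i1
            rw [hF3]
            dsimp only
            split_ifs
            · exact le_rfl
            · positivity
        _ = C2 * ENNReal.ofReal (α2 * (y ^ (-(1 / 2) : ℝ) *
            ((1 + y) ^ 2) ^ (1 / 2 - (1 - 3 * ε)))) := by
            rw [ENNReal.ofReal_mul hα2p]; ring
        _ ≤ C2 * ENNReal.ofReal (2 * coreBd ε y m) := by
            gcongr C2 * ENNReal.ofReal ?_; exact core_bd3 hε hy hm hm1
        _ = _ := by rw [ENNReal.ofReal_mul (by norm_num)]; norm_num; ring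
    · refine le_trans ?_ le_add_self
      have hmp : 0 < m := by linarith
      -- in this regime the cutoff confines `x` to a neighbourhood of infinity
      set x0 := Real.sqrt (m * y / 800) with hx0
      have hx0p : 0 < x0 := Real.sqrt_pos.2 (by positivity)
      have i3 := hqp (3 * y) ((1 + y) ^ 2) x0 n c (by linarith) (by positivity) hx0p.le
        (Or.inl hx0p)
      calc _ ≤ ENNReal.ofReal α2 * (Cp * ENNReal.ofReal
            ((3 * y * x0 ^ (2 - 1 / (1 - 4 * ε))) ^ (-(1 / (1 / (1 - 4 * ε)))) *
              ((1 + y) ^ 2) ^ (1 / (1 / (1 - 4 * ε)) - (1 - 3 * ε)))) := by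
            gcongr
            refine le_trans (lintegral_mono fun x => ENNReal.ofReal_le_ofReal ?_) i3
            rw [hF3]
            dsimp only
            by_cases hx : m * y ^ 3 ≤ 200 * (4 * y ^ 2 * (x - c) ^ 2)
            · have : x0 ≤ |x - c| := by
                rw [hx0]
                refine Real.sqrt_le_iff.2 ⟨abs_nonneg _, ?_⟩
                rw [sq_abs, div_le_iff₀ (by norm_num)]
                have hy2 : 0 < y ^ 2 := by positivity
                refine le_of_mul_le_mul_left ?_ hy2
                nlinarith
              rw [if_pos hx, if_pos this]
            · rw [if_neg hx]
              split_ifs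
              · positivity
              · exact le_rfl
        _ = Cp * ENNReal.ofReal (α2 * ((3 * y * x0 ^ (2 - 1 / (1 - 4 * ε))) ^
              (-(1 / (1 / (1 - 4 * ε)))) *
              ((1 + y) ^ 2) ^ (1 / (1 / (1 - 4 * ε)) - (1 - 3 * ε)))) := by
            rw [ENNReal.ofReal_mul hα2p]; ring
        _ ≤ Cp * ENNReal.ofReal (3200 * coreBd ε y m) := by
            gcongr Cp * ENNReal.ofReal ?_; exact core_bd4 hε hε1 hy hm1 hmy
        _ = _ := by rw [ENNReal.ofReal_mul (by norm_num)]; norm_num; ring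

/-- The second coordinate `ω = ξ - η`, which together with `ζ = ξ + η` diagonalises the symbol:
`ξ³ + η³ = (ζ³ + 3 ζ ω²) / 4`. -/
def om (v : R3) : ℝ := v.2.1 - v.2.2

lemma om_continuous : Continuous om := by unfold om; fun_prop

/-- The majorant without its modulation kernels: the derivative and Sobolev weights times `core`,
restricted to the region where both free frequencies are at most twice the frozen one. -/
def majF (ε r y ζb ζc S D : ℝ) : ℝ :=
  if |ζb| ≤ 2 * y ∧ |ζc| ≤ 2 * y then
    y ^ 2 * (1 + y) ^ (2 * r) * core ε y (min |ζb| |ζc|) |S| D else 0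

/-- The majorant of the squared kernel, with frozen variable `a` and free variables `b` and
`c = -a-b`. -/
def maj (ε r : ℝ) (a b : R3) : ℝ :=
  (kf ε (sg b) + kf ε (sg (-a - b))) *
    majF ε r |zt a| (zt b) (zt (-a - b)) (sg b + sg (-a - b))
      ((zt b * om b - zt (-a - b) * om (-a - b)) ^ 2)

lemma majF_nonneg {ε r y ζb ζc S D : ℝ} (hy : 0 ≤ y) : 0 ≤ majF ε r y ζb ζc S D := by
  unfold majF
  split_ifs
  · have := core_nonneg (ε := ε) (D := D) hy (le_min (abs_nonneg ζb) (abs_nonneg ζc)) (abs_nonneg S)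
    positivity
  · exact le_rfl

lemma maj_nonneg (ε r : ℝ) (a b : R3) : 0 ≤ maj ε r a b :=
  mul_nonneg (add_nonneg (kf_nonneg _ _) (kf_nonneg _ _)) (majF_nonneg (abs_nonneg _))

lemma majF_measurable {α : Type*} [MeasurableSpace α] (ε r : ℝ) {y b c S D : α → ℝ}
    (hy : Measurable y) (hb : Measurable b) (hc : Measurable c) (hS : Measurable S)
    (hD : Measurable D) : Measurable fun x => majF ε r (y x) (b x) (c x) (S x) (D x) := by
  unfold majF core
  have habs : ∀ {f : α → ℝ}, Measurable f → Measurable fun x => |f x| := fun hf => hf.abs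
  have hmin : Measurable fun x => min |b x| |c x| := (habs hb).min (habs hc)
  have hS' := habs hS
  refine Measurable.ite ?_ ?_ measurable_const
  · exact (measurableSet_le (habs hb) (by fun_prop)).inter (measurableSet_le (habs hc) (by fun_prop))
  · refine Measurable.mul (by fun_prop) (Measurable.add (by fun_prop) ?_)
    refine Measurable.mul (by fun_prop) (Measurable.ite ?_ (by fun_prop) measurable_const)
    exact measurableSet_le (by fun_prop) (by fun_prop)

lemma maj_measurable (ε r : ℝ) : Measurable (Function.uncurry (maj ε r)) := by
  unfold maj Function.uncurry
  have hz := zt_continuous.measurable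
  have hs := sg_continuous.measurable
  have ho := om_continuous.measurable
  have hk := kf_measurable ε
  refine Measurable.mul (by fun_prop) (majF_measurable ε r ?_ ?_ ?_ ?_ ?_)
  · exact (hz.comp measurable_fst).abs
  all_goals fun_prop

lemma lintegral_box {y z : ℝ} (hy : 0 < y) :
    ∫⁻ ζ : ℝ, ENNReal.ofReal (if |ζ| ≤ 2 * y ∧ |-z - ζ| ≤ 2 * y then
      (1 + min |ζ| |-z - ζ|) ^ (-(1 / 2) : ℝ) else 0) ≤ ENNReal.ofReal (16 * y ^ (1 / 2 : ℝ)) := by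
  set g : ℝ → ℝ := fun x => if |x| ≤ 2 * y then |x| ^ (-(1 / 2) : ℝ) else 0 with hg
  have hg0 : ∀ x, 0 ≤ g x := fun x => by rw [hg]; dsimp only; split_ifs <;> positivity
  have hgm : Measurable fun x => ENNReal.ofReal (g x) := by
    refine Measurable.ennreal_ofReal (Measurable.ite ?_ (by fun_prop) measurable_const)
    exact measurableSet_le (by fun_prop) measurable_const
  have hgi : ∫⁻ x, ENNReal.ofReal (g x) ≤ ENNReal.ofReal (8 * y ^ (1 / 2 : ℝ)) := by
    refine (lintegral_abs_rpow_le (by norm_num) (by norm_num) (by positivity)).trans ?_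
    refine ENNReal.ofReal_le_ofReal ?_
    rw [Real.mul_rpow (by norm_num) hy.le, show (-(1 / 2) + 1 : ℝ) = 1 / 2 by norm_num]
    have := two_rpow_le_two (p := 1 / 2) (by norm_num)
    have hp : 0 ≤ y ^ (1 / 2 : ℝ) := by positivity
    nlinarith
  have hgi' : ∫⁻ x, ENNReal.ofReal (g (-z - x)) ≤ ENNReal.ofReal (8 * y ^ (1 / 2 : ℝ)) := by
    rw [lintegral_sub_left_eq_self (fun x => ENNReal.ofReal (g x)) (-z)]
    exact hgi
  calc _ ≤ ∫⁻ x, (ENNReal.ofReal (g x) + ENNReal.ofReal (g (-z - x))) := by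
        have h0 : ∀ᵐ x : ℝ, x ≠ 0 := by simp [ae_iff]
        have h1 : ∀ᵐ x : ℝ, x ≠ -z := by simp [ae_iff]
        refine lintegral_mono_ae ?_
        filter_upwards [h0, h1] with x hx0 hx1
        rw [← ENNReal.ofReal_add (hg0 _) (hg0 _)]
        refine ENNReal.ofReal_le_ofReal ?_
        split_ifs with h
        · have a1 : 0 < |x| := abs_pos.2 hx0
          have a2 : 0 < |-z - x| := abs_pos.2 (sub_ne_zero.2 hx1.symm)
          have e1 : g x = |x| ^ (-(1 / 2) : ℝ) := if_pos h.1
          have e2 : g (-z - x) = |-z - x| ^ (-(1 / 2) : ℝ) := if_pos h.2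
          rcases min_cases |x| |-z - x| with ⟨hm, _⟩ | ⟨hm, _⟩
          · rw [hm]
            refine le_trans ?_ (le_add_of_nonneg_right (hg0 _))
            rw [e1]
            exact Real.rpow_le_rpow_of_nonpos a1 (by linarith) (by norm_num)
          · rw [hm]
            refine le_trans ?_ (le_add_of_nonneg_left (hg0 _))
            rw [e2]
            exact Real.rpow_le_rpow_of_nonpos a2 (by linarith) (by norm_num)
        · exact add_nonneg (hg0 _) (hg0 _)
    _ ≤ ENNReal.ofReal (8 * y ^ (1 / 2 : ℝ)) + ENNReal.ofReal (8 * y ^ (1 / 2 : ℝ)) := by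
        rw [lintegral_add_left hgm]
        exact add_le_add hgi hgi'
    _ = _ := by
        rw [← ENNReal.ofReal_add (by positivity) (by positivity)]
        congr 1
        ring

/-- The spatial part of the marginal. For fixed `ζ = ξ + η` the resonance function is a quadratic
polynomial in `ξ` with leading coefficient `3 ζ_a`, whose vertex is the zero of
`ζ_b ω_b - ζ_c ω_c`; so `core_lintegral` applies. -/
lemma majF_lintegral {ε r : ℝ} (hε : 0 < ε) (hε1 : ε ≤ 1 / 20) (hr : 2 * r - 2 + 14 * ε ≤ -1) :
    ∃ C : ℝ≥0∞, C ≠ ⊤ ∧ ∀ t z o : ℝ, z ≠ 0 → ∀ F : ℝ → ℝ → ℝ,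
      (∀ x ζ, F x ζ = majF ε r |z| ζ (-z - ζ)
        (t - (ζ ^ 3 + 3 * ζ * (2 * x - ζ) ^ 2) / 4 -
          ((-z - ζ) ^ 3 + 3 * (-z - ζ) * (-o - (2 * x - ζ)) ^ 2) / 4)
        ((ζ * (2 * x - ζ) - (-z - ζ) * (-o - (2 * x - ζ))) ^ 2)) →
      ∫⁻ ζ, ∫⁻ x, ENNReal.ofReal (F x ζ) ≤ C := by
  obtain ⟨C, hC, hcore⟩ := core_lintegral hε hε1
  refine ⟨16 * C, by finiteness, ?_⟩
  intro t z o hz F hF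
  have hy : 0 < |z| := abs_pos.2 hz
  set y := |z| with hydef
  have hY : 0 < 1 + y := by linarith
  set B : ℝ := y ^ 2 * (1 + y) ^ (2 * r) with hB
  have hB0 : 0 ≤ B := by positivity
  have inner : ∀ ζ, ∫⁻ x, ENNReal.ofReal (F x ζ) ≤
      (C * ENNReal.ofReal (B * (y ^ (-(3 / 2) : ℝ) * (1 + y) ^ (-2 + 14 * ε)))) *
        ENNReal.ofReal (if |ζ| ≤ 2 * y ∧ |-z - ζ| ≤ 2 * y then
          (1 + min |ζ| |-z - ζ|) ^ (-(1 / 2) : ℝ) else 0) := by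
    intro ζ
    by_cases hb : |ζ| ≤ 2 * y ∧ |-z - ζ| ≤ 2 * y
    · set m := min |ζ| |-z - ζ| with hm
      have hm0 : 0 ≤ m := le_min (abs_nonneg _) (abs_nonneg _)
      have hmy : m ≤ 2 * y := (min_le_left _ _).trans hb.1
      obtain ⟨X, hX⟩ : ∃ X : ℝ, z * X = ((-z - ζ) * o + ζ * z) / 2 :=
        ⟨((-z - ζ) * o + ζ * z) / 2 / z, by field_simp⟩
      set Sf : ℝ → ℝ := fun x => t - (ζ ^ 3 + 3 * ζ * (2 * x - ζ) ^ 2) / 4 -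
          ((-z - ζ) ^ 3 + 3 * (-z - ζ) * (-o - (2 * x - ζ)) ^ 2) / 4 with hSf
      have hS : ∀ x, |Sf x| = 3 * y * |(x - X) ^ 2 - -(Sf X) / (3 * z)| := by
        intro x
        have : Sf x = 3 * z * ((x - X) ^ 2 - -(Sf X) / (3 * z)) := by
          rw [mul_sub, mul_div_cancel₀ _ (by simpa using hz)]
          rw [hSf]
          linear_combination 6 * (x - X) * hX
        rw [this, abs_mul, abs_mul, abs_of_pos (by norm_num : (0 : ℝ) < 3)]
      have hD : ∀ x, (ζ * (2 * x - ζ) - (-z - ζ) * (-o - (2 * x - ζ))) ^ 2 =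
          4 * y ^ 2 * (x - X) ^ 2 := by
        intro x
        have : ζ * (2 * x - ζ) - (-z - ζ) * (-o - (2 * x - ζ)) = -2 * z * (x - X) := by
          linear_combination -2 * hX
        rw [this, hydef, sq_abs]
        ring
      have hFx : ∀ x, ENNReal.ofReal (F x ζ) = ENNReal.ofReal B * ENNReal.ofReal
          (core ε y m (3 * y * |(x - X) ^ 2 - -(Sf X) / (3 * z)|) (4 * y ^ 2 * (x - X) ^ 2)) := by
        intro x
        rw [hF, majF, if_pos hb, hD, ← hS, ← ENNReal.ofReal_mul hB0]
      simp only [hFx, if_pos hb]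
      rw [lintegral_const_mul' _ _ ENNReal.ofReal_ne_top]
      calc _ ≤ ENNReal.ofReal B * (C * ENNReal.ofReal (coreBd ε y m)) := by
            gcongr
            exact hcore y m X _ hy hm0 hmy
        _ = _ := by
            rw [coreBd, mul_assoc C, ← ENNReal.ofReal_mul (by positivity), mul_left_comm,
              ← ENNReal.ofReal_mul hB0]
            congr 2
            ring
    · simp [hF, majF, if_neg hb]
  refine (lintegral_mono inner).trans ?_
  rw [lintegral_const_mul' _ _ (by finiteness)]
  refine (mul_le_mul_right (lintegral_box hy) _).trans ?_
  rw [mul_assoc, ← ENNReal.ofReal_mul (by positivity), mul_comm 16 C]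
  gcongr
  rw [show (16 : ℝ≥0∞) = ENNReal.ofReal 16 by norm_num]
  refine ENNReal.ofReal_le_ofReal ?_
  calc _ = 16 * ((y ^ 2 * y ^ (-(3 / 2) : ℝ) * y ^ (1 / 2 : ℝ)) *
        ((1 + y) ^ (2 * r) * (1 + y) ^ (-2 + 14 * ε))) := by rw [hB]; ring
    _ = 16 * (y * (1 + y) ^ (2 * r - 2 + 14 * ε)) := by
        rw [← Real.rpow_natCast, ← Real.rpow_add hy, ← Real.rpow_add hy, ← Real.rpow_add hY]
        norm_num
        left
        congr 1
        ring
    _ ≤ 16 * ((1 + y) * (1 + y) ^ (-1 : ℝ)) := by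
        gcongr
        · linarith
        · linarith
    _ = 16 := by rw [Real.rpow_neg_one, mul_inv_cancel₀ hY.ne', mul_one]

lemma maj_lintegral {ε r : ℝ} (hε : 0 < ε) (hε1 : ε ≤ 1 / 20) (hr : 2 * r - 2 + 14 * ε ≤ -1) :
    ∃ C : ℝ≥0∞, C ≠ ⊤ ∧ ∀ a : R3, ∫⁻ b : R3, ENNReal.ofReal (maj ε r a b) ≤ C := by
  obtain ⟨C, hC, hF⟩ := majF_lintegral hε hε1 hr
  have hk := kf_lintegral hε (by linarith)
  set k := ∫⁻ x : ℝ, ENNReal.ofReal (kf ε x) with hkdef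
  refine ⟨(k + k) * C, by finiteness, ?_⟩
  intro a
  by_cases hz : zt a = 0
  · have : ∀ b, maj ε r a b = 0 := fun b => by simp [maj, majF, hz]
    simp [this]
  obtain ⟨τa, ξa, ηa⟩ := a
  set G : ℝ → ℝ → ℝ := fun ξ η => majF ε r |ξa + ηa| (ξ + η) (-(ξa + ηa) - (ξ + η))
    (-τa - ((ξ + η) ^ 3 + 3 * (ξ + η) * (ξ - η) ^ 2) / 4 -
      ((-(ξa + ηa) - (ξ + η)) ^ 3 + 3 * (-(ξa + ηa) - (ξ + η)) *
        (-(ξa - ηa) - (ξ - η)) ^ 2) / 4)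
    (((ξ + η) * (ξ - η) - (-(ξa + ηa) - (ξ + η)) * (-(ξa - ηa) - (ξ - η))) ^ 2) with hG
  have hGm : Measurable fun p : ℝ × ℝ => G p.1 p.2 := by
    refine majF_measurable ε r measurable_const ?_ ?_ ?_ ?_ <;> fun_prop
  have hmaj : ∀ τ ξ η : ℝ, maj ε r (τa, ξa, ηa) (τ, ξ, η) =
      (kf ε (τ - ξ ^ 3 - η ^ 3) + kf ε (-τa - (-ξa - ξ) ^ 3 - (-ηa - η) ^ 3 - τ)) * G ξ η := by
    intro τ ξ η
    have e1 : sg (τ, ξ, η) = τ - ξ ^ 3 - η ^ 3 := rfl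
    have e2 : sg (-(τa, ξa, ηa) - (τ, ξ, η)) =
        -τa - (-ξa - ξ) ^ 3 - (-ηa - η) ^ 3 - τ := by
      change (-τa - τ) - (-ξa - ξ) ^ 3 - (-ηa - η) ^ 3 = _
      ring
    have e3 : zt (-(τa, ξa, ηa) - (τ, ξ, η)) = -(ξa + ηa) - (ξ + η) := by
      change (-ξa - ξ) + (-ηa - η) = _
      ring
    have e4 : om (-(τa, ξa, ηa) - (τ, ξ, η)) = -(ξa - ηa) - (ξ - η) := by
      change (-ξa - ξ) - (-ηa - η) = _
      ring
    have e5 : zt (τ, ξ, η) = ξ + η := rfl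
    have e6 : om (τ, ξ, η) = ξ - η := rfl
    have e7 : zt (τa, ξa, ηa) = ξa + ηa := rfl
    rw [maj, e1, e2, e3, e4, e5, e6, e7, hG]
    congr 2
    ring
  have hMm : Measurable fun b : R3 => ENNReal.ofReal (maj ε r (τa, ξa, ηa) b) :=
    ((maj_measurable ε r).comp (measurable_const.prodMk measurable_id)).ennreal_ofReal
  have hkm := (kf_measurable ε).ennreal_ofReal
  calc ∫⁻ b : R3, ENNReal.ofReal (maj ε r (τa, ξa, ηa) b)
      = ∫⁻ q : ℝ × ℝ, ∫⁻ τ : ℝ, ENNReal.ofReal (maj ε r (τa, ξa, ηa) (τ, q)) := by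
        rw [Measure.volume_eq_prod, lintegral_prod_symm' _ hMm]
    _ ≤ ∫⁻ q : ℝ × ℝ, (k + k) * ENNReal.ofReal (G q.1 q.2) := by
        refine lintegral_mono fun q => ?_
        obtain ⟨ξ, η⟩ := q
        have hG0 : 0 ≤ G ξ η := majF_nonneg (abs_nonneg _)
        simp only [hmaj]
        calc _ ≤ ∫⁻ τ : ℝ, (ENNReal.ofReal (kf ε (τ - (ξ ^ 3 + η ^ 3))) +
              ENNReal.ofReal (kf ε (-τa - (-ξa - ξ) ^ 3 - (-ηa - η) ^ 3 - τ))) *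
                ENNReal.ofReal (G ξ η) := by
              refine lintegral_mono fun τ => ?_
              rw [ENNReal.ofReal_mul (add_nonneg (kf_nonneg _ _) (kf_nonneg _ _)), sub_sub]
              gcongr
              exact ENNReal.ofReal_add_le
          _ = _ := by
              have hkm' : Measurable fun τ => ENNReal.ofReal (kf ε (τ - (ξ ^ 3 + η ^ 3))) :=
                hkm.comp (measurable_id.sub_const _)
              rw [lintegral_mul_const' _ _ ENNReal.ofReal_ne_top,
                lintegral_add_left hkm',
                lintegral_sub_right_eq_self (fun x => ENNReal.ofReal (kf ε x)),
                lintegral_sub_left_eq_self (fun x => ENNReal.ofReal (kf ε x))]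
    _ = (k + k) * ∫⁻ ξ : ℝ, ∫⁻ η : ℝ, ENNReal.ofReal (G ξ η) := by
        rw [lintegral_const_mul' _ _ (by finiteness), Measure.volume_eq_prod,
          lintegral_prod _ hGm.ennreal_ofReal.aemeasurable]
    _ = (k + k) * ∫⁻ ξ : ℝ, ∫⁻ ζ : ℝ, ENNReal.ofReal (G ξ (ζ - ξ)) := by
        congr 1
        refine lintegral_congr fun ξ => ?_
        rw [lintegral_sub_right_eq_self (fun η => ENNReal.ofReal (G ξ η))]
    _ = (k + k) * ∫⁻ ζ : ℝ, ∫⁻ ξ : ℝ, ENNReal.ofReal (G ξ (ζ - ξ)) := by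
        rw [lintegral_lintegral_swap]
        refine Measurable.aemeasurable ?_
        exact (hGm.comp (measurable_fst.prodMk (measurable_snd.sub measurable_fst))).ennreal_ofReal
    _ ≤ (k + k) * C := by
        gcongr
        refine hF (-τa) (ξa + ηa) (ξa - ηa) hz (fun ξ ζ => G ξ (ζ - ξ)) fun ξ ζ => ?_
        rw [hG]
        dsimp only
        rw [show ξ + (ζ - ξ) = ζ by ring, show ξ - (ζ - ξ) = 2 * ξ - ζ by ring]

/-! ### The pointwise bound of the kernel by the majorant -/

lemma sum_zero_coords {a b c : R3} (h : a + b + c = 0) :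
    zt a + zt b + zt c = 0 ∧ om a + om b + om c = 0 ∧
      sg a + sg b + sg c = -(3 / 4) * (zt a * zt b * zt c +
        (zt a * om a ^ 2 + zt b * om b ^ 2 + zt c * om c ^ 2)) := by
  obtain ⟨t1, x1, y1⟩ := a
  obtain ⟨t2, x2, y2⟩ := b
  obtain ⟨t3, x3, y3⟩ := c
  simp only [Prod.mk_add_mk, Prod.mk_eq_zero] at h
  obtain ⟨h1, h2, h3⟩ := h
  obtain rfl : t3 = -t1 - t2 := by linarith
  obtain rfl : x3 = -x1 - x2 := by linarith
  obtain rfl : y3 = -y1 - y2 := by linarith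
  simp only [zt, om, sg]
  refine ⟨by ring, by ring, by ring⟩

/-- The configuration `a + b + c = 0` can be handled by the majorant frozen at `a`: both other
frequencies are controlled by `ζ_a`, and one of the three mechanisms in `core` applies. -/
def Good (a b c : R3) : Prop :=
  |zt b| ≤ 2 * |zt a| ∧ |zt c| ≤ 2 * |zt a| ∧
    (min |zt b| |zt c| * |zt a| ^ 2 ≤ 6 * lam a ∨
      min |zt b| |zt c| * |zt a| ^ 2 ≤ 6 * (lam b + lam c) ∨
      min |zt b| |zt c| * |zt a| ^ 3 ≤ 200 * (zt b * om b - zt c * om c) ^ 2)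

lemma Good.symm {a b c : R3} (h : Good a b c) : Good a c b := by
  obtain ⟨h1, h2, h3⟩ := h
  refine ⟨h2, h1, ?_⟩
  rw [min_comm, add_comm (lam c), show (zt c * om c - zt b * om b) ^ 2 =
    (zt b * om b - zt c * om c) ^ 2 by ring]
  exact h3

lemma abs_sg_le_lam (a : R3) : |sg a| ≤ lam a := by
  unfold lam; nlinarith [sq_nonneg (zt a)]

/-- Small transversalities cannot cancel the cubic resonance: in terms of `D₁ = ζ₂ω₂ - ζ₃ω₃` and
`D₂ = ζ₃ω₃ - ζ₁ω₁`, one has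
`(ζ₁² + ζ₁ζ₂ + ζ₂²) Σ ζ_i ω_i² = ζ₂ D₁² - 2 ζ₃ D₁ D₂ + ζ₁ D₂²`, which is dominated by
`ζ₁ζ₂ζ₃` when `D₁` and `D₂` are small. -/
lemma resonance_lower {z1 z2 z3 o1 o2 o3 mm Z : ℝ} (hz : z1 + z2 + z3 = 0)
    (ho : o1 + o2 + o3 = 0) (hmm : mm = |z3|) (hZ1 : |z1| ≤ Z) (hZ2 : |z2| ≤ Z) (hmZ : mm ≤ Z)
    (hprod : Z ^ 2 / 2 ≤ |z1| * |z2|) (hq : 3 / 4 * Z ^ 2 ≤ z1 ^ 2 + z1 * z2 + z2 ^ 2)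
    (h1 : 200 * (z2 * o2 - z3 * o3) ^ 2 ≤ mm * Z ^ 3)
    (h2 : 200 * (z3 * o3 - z1 * o1) ^ 2 ≤ mm * Z ^ 3) (hpos : 0 < mm * Z ^ 2) :
    4 / 9 * (mm * Z ^ 2) < |z1 * z2 * z3 + (z1 * o1 ^ 2 + z2 * o2 ^ 2 + z3 * o3 ^ 2)| := by
  have hm0 : 0 ≤ mm := hmm ▸ abs_nonneg _
  have hZ0 : 0 ≤ Z := (abs_nonneg _).trans hZ1
  have hZp : 0 < Z ^ 2 := pos_of_mul_pos_right hpos hm0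
  have hP : mm * Z ^ 2 / 2 ≤ |z1 * z2 * z3| := by
    rw [abs_mul, abs_mul, ← hmm]
    have := mul_le_mul_of_nonneg_right hprod hm0
    linarith
  have hid : (z1 ^ 2 + z1 * z2 + z2 ^ 2) * (z1 * o1 ^ 2 + z2 * o2 ^ 2 + z3 * o3 ^ 2) =
      z2 * (z2 * o2 - z3 * o3) ^ 2 -
        2 * z3 * ((z2 * o2 - z3 * o3) * (z3 * o3 - z1 * o1)) + z1 * (z3 * o3 - z1 * o1) ^ 2 := by
    obtain rfl : z3 = -z1 - z2 := by linarith
    obtain rfl : o3 = -o1 - o2 := by linarith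
    ring
  generalize z1 * o1 ^ 2 + z2 * o2 ^ 2 + z3 * o3 ^ 2 = Q at *
  generalize z2 * o2 - z3 * o3 = D1 at *
  generalize z3 * o3 - z1 * o1 = D2 at *
  obtain ⟨T, hT⟩ : ∃ T, T = mm * Z ^ 3 / 200 := ⟨_, rfl⟩
  have hT1 : D1 ^ 2 ≤ T := by linarith
  have hT2 : D2 ^ 2 ≤ T := by linarith
  have hT12 : |D1 * D2| ≤ T := by
    rw [abs_le]
    constructor <;> linarith [sq_nonneg (D1 + D2), sq_nonneg (D1 - D2), add_sq D1 D2, sub_sq D1 D2]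
  have hT0 : 0 ≤ T := (sq_nonneg _).trans hT1
  have hrhs : |(z1 ^ 2 + z1 * z2 + z2 ^ 2) * Q| ≤ 4 * Z * T := by
    rw [hid]
    have b1 : |z2 * D1 ^ 2| ≤ Z * T := by
      rw [abs_mul, abs_of_nonneg (sq_nonneg D1)]; gcongr
    have b2 : |2 * z3 * (D1 * D2)| ≤ 2 * Z * T := by
      rw [abs_mul, abs_mul, abs_of_pos (by norm_num : (0 : ℝ) < 2), ← hmm]; gcongr
    have b3 : |z1 * D2 ^ 2| ≤ Z * T := by
      rw [abs_mul, abs_of_nonneg (sq_nonneg D2)]; gcongr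
    have b4 := abs_add_le (z2 * D1 ^ 2 - 2 * z3 * (D1 * D2)) (z1 * D2 ^ 2)
    have b5 := abs_sub (z2 * D1 ^ 2) (2 * z3 * (D1 * D2))
    linarith
  have hqnn : 0 ≤ z1 ^ 2 + z1 * z2 + z2 ^ 2 := le_trans (by positivity) hq
  have hQabs : |Q| ≤ 4 / 150 * (mm * Z ^ 2) := by
    rw [abs_mul, abs_of_nonneg hqnn] at hrhs
    have h3 : 3 / 4 * Z ^ 2 * |Q| ≤ 4 * Z * T :=
      (mul_le_mul_of_nonneg_right hq (abs_nonneg _)).trans hrhs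
    refine le_of_mul_le_mul_left ?_ hZp
    rw [hT] at h3
    linarith
  have hPQ : |z1 * z2 * z3| - |Q| ≤ |z1 * z2 * z3 + Q| := by
    have := abs_sub_abs_le_abs_sub (z1 * z2 * z3) (-Q)
    rwa [abs_neg, sub_neg_eq_add] at this
  linarith

lemma max_facts {x y : ℝ} (h1 : |x| ≤ 2 * |y|) (h2 : |y| ≤ 2 * |x|) :
    max |x| |y| ^ 2 / 2 ≤ |x| * |y| ∧ 3 / 4 * max |x| |y| ^ 2 ≤ x ^ 2 + x * y + y ^ 2 := by
  rcases max_cases |x| |y| with ⟨e, _⟩ | ⟨e, _⟩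
  · rw [e]
    refine ⟨by nlinarith [abs_nonneg x], ?_⟩
    rw [sq_abs]
    nlinarith [sq_nonneg (x + 2 * y)]
  · rw [e]
    refine ⟨by nlinarith [abs_nonneg y], ?_⟩
    rw [sq_abs]
    nlinarith [sq_nonneg (2 * x + y)]

/-- Either some modulation is large, or one of the two transversalities attached to the large
frequencies is. -/
lemma cover_min {a b c : R3} (h : a + b + c = 0) (ha : |zt c| ≤ |zt a|) (hb : |zt c| ≤ |zt b|) :
    Good a b c ∨ Good b c a := by
  obtain ⟨hz, ho, hs⟩ := sum_zero_coords h
  have hla := abs_sg_le_lam a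
  have hlb := abs_sg_le_lam b
  have hlc := abs_sg_le_lam c
  have eb : |zt b| ≤ |zt a| + |zt c| := by
    rw [show zt b = -(zt a + zt c) by linarith, abs_neg]; exact abs_add_le _ _
  have ea : |zt a| ≤ |zt b| + |zt c| := by
    rw [show zt a = -(zt b + zt c) by linarith, abs_neg]; exact abs_add_le _ _
  have m1 : min |zt b| |zt c| = |zt c| := min_eq_right hb
  have m2 : min |zt c| |zt a| = |zt c| := min_eq_left ha
  by_contra hcon
  push Not at hcon
  obtain ⟨n1, n2⟩ := hcon
  have n1' : ¬ _ := fun hh => n1 ⟨by linarith, by linarith [abs_nonneg (zt a)], hh⟩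
  have n2' : ¬ _ := fun hh => n2 ⟨by linarith [abs_nonneg (zt b)], by linarith, hh⟩
  rw [m1] at n1'
  rw [m2] at n2'
  push Not at n1' n2'
  obtain ⟨p1, p2, p3⟩ := n1'
  obtain ⟨-, -, p4⟩ := n2'
  have hmm : 0 ≤ |zt c| := abs_nonneg _
  set mm := |zt c| with hmmdef
  set Z := max |zt a| |zt b| with hZ
  have hZa : |zt a| ≤ Z := le_max_left _ _
  have hZb : |zt b| ≤ Z := le_max_right _ _
  have hZ0 : 0 ≤ Z := (abs_nonneg _).trans hZa
  obtain ⟨hprod, hq⟩ := max_facts (x := zt a) (y := zt b) (by linarith) (by linarith)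
  rw [← hZ] at hprod hq
  have hZ2 : |zt a| ^ 2 ≤ Z ^ 2 := by gcongr
  have hZ3 : |zt a| ^ 3 ≤ Z ^ 3 := by gcongr
  have hZ3' : |zt b| ^ 3 ≤ Z ^ 3 := by gcongr
  have hsig : 3 * (|sg a| + |sg b| + |sg c|) < mm * Z ^ 2 := by
    have := mul_le_mul_of_nonneg_left hZ2 hmm
    linarith
  have hlow := resonance_lower hz ho hmmdef hZa hZb (ha.trans hZa) hprod hq
    (p3.le.trans (mul_le_mul_of_nonneg_left hZ3 hmm))
    (p4.le.trans (mul_le_mul_of_nonneg_left hZ3' hmm)) (lt_of_le_of_lt (by positivity) hsig)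
  have hsum : |sg a + sg b + sg c| ≤ |sg a| + |sg b| + |sg c| :=
    (abs_add_le _ _).trans (by gcongr; exact abs_add_le _ _)
  rw [hs, abs_mul, abs_neg, abs_of_pos (by norm_num : (0 : ℝ) < 3 / 4)] at hsum
  linarith

lemma cover {a b c : R3} (h : a + b + c = 0) : Good a b c ∨ Good b c a ∨ Good c a b := by
  have h1 : b + c + a = 0 := by rw [← h]; abel
  have h2 : c + a + b = 0 := by rw [← h]; abel
  rcases le_total |zt a| |zt b| with hab | hab
  · rcases le_total |zt a| |zt c| with hac | hac
    · rcases cover_min h1 hab hac with g | g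
      · exact Or.inr (Or.inl g)
      · exact Or.inr (Or.inr g)
    · rcases cover_min h hac (hac.trans hab) with g | g
      · exact Or.inl g
      · exact Or.inr (Or.inl g)
  · rcases le_total |zt b| |zt c| with hbc | hbc
    · rcases cover_min h2 hbc hab with g | g
      · exact Or.inr (Or.inr g)
      · exact Or.inl g
    · rcases cover_min h (hbc.trans hab) hbc with g | g
      · exact Or.inl g
      · exact Or.inr (Or.inl g)

section Pair

variable {ε : ℝ}

lemma one_add_sg_le_lam (a : R3) : 1 + |sg a| ≤ lam a := by
  unfold lam; nlinarith [sq_nonneg (zt a)]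

lemma pair_aux (hε : 0 < ε) (hε1 : ε ≤ 1 / 20) {B K : ℝ} (hB : 0 < B) (hK : 1 ≤ K) {b c : R3}
    (hbc : lam c ≤ lam b) (h : B ≤ K * (lam b + lam c)) :
    lam b ^ (-(1 - ε)) * lam c ^ (-(1 - ε)) ≤ 2 * K * (B ^ (-(1 - 3 * ε)) * kf ε (sg c)) := by
  have hb := one_le_lam b
  have hc := one_le_lam c
  have hb0 : 0 < lam b := by linarith
  have hc0 : 0 < lam c := by linarith
  have h1 : lam b ^ (-(1 - 3 * ε)) ≤ 2 * K * B ^ (-(1 - 3 * ε)) := by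
    calc lam b ^ (-(1 - 3 * ε)) ≤ (B / (2 * K)) ^ (-(1 - 3 * ε)) := by
          refine Real.rpow_le_rpow_of_nonpos (by positivity) ?_ (by linarith)
          rw [div_le_iff₀ (by positivity)]
          nlinarith
      _ = (2 * K) ^ (1 - 3 * ε) * B ^ (-(1 - 3 * ε)) := by
          rw [Real.div_rpow hB.le (by positivity), Real.rpow_neg (by positivity : 0 ≤ 2 * K),
            div_inv_eq_mul, mul_comm]
      _ ≤ (2 * K) ^ (1 : ℝ) * B ^ (-(1 - 3 * ε)) := by
          gcongr
          · linarith
          · linarith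
      _ = _ := by rw [Real.rpow_one]
  have h2 : lam b ^ (-2 * ε) ≤ lam c ^ (-2 * ε) :=
    Real.rpow_le_rpow_of_nonpos hc0 hbc (by linarith)
  have h3 : lam c ^ (-(1 + ε)) ≤ kf ε (sg c) := by
    calc lam c ^ (-(1 + ε)) ≤ (1 + |sg c|) ^ (-(1 + ε)) :=
          Real.rpow_le_rpow_of_nonpos (by positivity) (one_add_sg_le_lam c) (by linarith)
      _ ≤ _ := by
          unfold kf
          refine le_add_of_nonneg_right ?_
          split_ifs <;> positivity
  calc _ = lam b ^ (-(1 - 3 * ε)) * (lam b ^ (-2 * ε) * lam c ^ (-(1 - ε))) := by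
        rw [← mul_assoc, ← Real.rpow_add hb0]
        congr 2
        ring
    _ ≤ 2 * K * B ^ (-(1 - 3 * ε)) * (lam c ^ (-2 * ε) * lam c ^ (-(1 - ε))) := by gcongr
    _ = 2 * K * B ^ (-(1 - 3 * ε)) * lam c ^ (-(1 + ε)) := by
        rw [← Real.rpow_add hc0]
        congr 2
        ring
    _ ≤ 2 * K * B ^ (-(1 - 3 * ε)) * kf ε (sg c) := by gcongr
    _ = _ := by ring

lemma pair_bound (hε : 0 < ε) (hε1 : ε ≤ 1 / 20) {B K : ℝ} (hB : 0 < B) (hK : 1 ≤ K) {b c : R3}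
    (h : B ≤ K * (lam b + lam c)) :
    lam b ^ (-(1 - ε)) * lam c ^ (-(1 - ε)) ≤
      2 * K * (B ^ (-(1 - 3 * ε)) * (kf ε (sg b) + kf ε (sg c))) := by
  have k1 := kf_nonneg ε (sg b)
  have k2 := kf_nonneg ε (sg c)
  have hBp : 0 ≤ B ^ (-(1 - 3 * ε)) := by positivity
  rcases le_total (lam c) (lam b) with hbc | hbc
  · refine (pair_aux hε hε1 hB hK hbc h).trans ?_
    gcongr
    linarith
  · rw [mul_comm]
    refine (pair_aux hε hε1 hB hK hbc (by linarith)).trans ?_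
    gcongr
    linarith

lemma frozen_sq_le (a : R3) : (1 + |zt a|) ^ 2 ≤ 2 * lam a := by
  unfold lam
  nlinarith [sq_nonneg (1 - |zt a|), sq_abs (zt a), abs_nonneg (sg a)]

lemma free_sum_le {a b c : R3} (h : a + b + c = 0) :
    (1 + |zt a|) ^ 2 + |sg b + sg c| ≤ 4 * (lam b + lam c) := by
  obtain ⟨hz, -, -⟩ := sum_zero_coords h
  have e : zt a ^ 2 ≤ 2 * zt b ^ 2 + 2 * zt c ^ 2 := by
    rw [show zt a = -(zt b + zt c) by linarith]; nlinarith [sq_nonneg (zt b - zt c)]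
  have := abs_add_le (sg b) (sg c)
  unfold lam
  nlinarith [sq_nonneg (1 - |zt a|), sq_abs (zt a), abs_nonneg (sg b), abs_nonneg (sg c)]

lemma frozen_rpow_le (hε : 0 < ε) (hε1 : ε ≤ 1 / 20) (a : R3) :
    lam a ^ (-(1 - ε)) ≤ 2 * (1 + |zt a|) ^ (-2 + 2 * ε) := by
  have h0 : 0 < 1 + |zt a| := by positivity
  calc lam a ^ (-(1 - ε)) ≤ ((1 + |zt a|) ^ 2 / 2) ^ (-(1 - ε)) :=
        Real.rpow_le_rpow_of_nonpos (by positivity) (by linarith [frozen_sq_le a]) (by linarith)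
    _ = 2 ^ (1 - ε) * (1 + |zt a|) ^ (-2 + 2 * ε) := by
        rw [Real.div_rpow (by positivity) (by norm_num), Real.rpow_neg (by norm_num : (0 : ℝ) ≤ 2),
          div_inv_eq_mul, mul_comm, ← Real.rpow_natCast, ← Real.rpow_mul h0.le]
        congr 2
        push_cast; ring
    _ ≤ _ := by gcongr; exact two_rpow_le_two (by linarith)

lemma frozen_rpow_le' (hε : 0 < ε) (hε1 : ε ≤ 1 / 20) {a : R3} {m : ℝ} (hm : 0 ≤ m)
    (h : m * |zt a| ^ 2 ≤ 6 * lam a) :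
    lam a ^ (-(1 - ε)) ≤ 16 * (((1 + |zt a|) ^ 2 + m * |zt a| ^ 2) ^ (-(1 / 2) : ℝ) *
      (1 + |zt a|) ^ (-1 + 2 * ε)) := by
  have h0 : 0 < 1 + |zt a| := by positivity
  have hl : 0 < lam a := by linarith [one_le_lam a]
  have hA : 0 < (1 + |zt a|) ^ 2 + m * |zt a| ^ 2 := by positivity
  have e1 : lam a ^ (-(1 / 2) : ℝ) ≤ 8 * ((1 + |zt a|) ^ 2 + m * |zt a| ^ 2) ^ (-(1 / 2) : ℝ) := by
    calc _ ≤ (((1 + |zt a|) ^ 2 + m * |zt a| ^ 2) / 8) ^ (-(1 / 2) : ℝ) :=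
          Real.rpow_le_rpow_of_nonpos (by positivity) (by linarith [frozen_sq_le a]) (by norm_num)
      _ = 8 ^ (1 / 2 : ℝ) * ((1 + |zt a|) ^ 2 + m * |zt a| ^ 2) ^ (-(1 / 2) : ℝ) := by
          rw [Real.div_rpow (by positivity) (by norm_num),
            Real.rpow_neg (by norm_num : (0 : ℝ) ≤ 8), div_inv_eq_mul, mul_comm]
      _ ≤ 8 ^ (1 : ℝ) * _ := by
          gcongr
          · norm_num
          · norm_num
      _ = _ := by norm_num
  have e2 : lam a ^ (-(1 / 2) + ε) ≤ 2 * (1 + |zt a|) ^ (-1 + 2 * ε) := by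
    calc _ ≤ ((1 + |zt a|) ^ 2 / 2) ^ (-(1 / 2) + ε) :=
          Real.rpow_le_rpow_of_nonpos (by positivity) (by linarith [frozen_sq_le a]) (by linarith)
      _ = 2 ^ (-(-(1 / 2) + ε)) * (1 + |zt a|) ^ (-1 + 2 * ε) := by
          rw [Real.div_rpow (by positivity) (by norm_num), Real.rpow_neg (by norm_num : (0 : ℝ) ≤ 2),
            div_eq_mul_inv, mul_comm, ← Real.rpow_natCast, ← Real.rpow_mul h0.le]
          congr 2
          push_cast; ring
      _ ≤ _ := by gcongr; exact two_rpow_le_two (by linarith)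
  calc _ = lam a ^ (-(1 / 2) : ℝ) * lam a ^ (-(1 / 2) + ε) := by
        rw [← Real.rpow_add hl]; congr 1; ring
    _ ≤ (8 * ((1 + |zt a|) ^ 2 + m * |zt a| ^ 2) ^ (-(1 / 2) : ℝ)) *
        (2 * (1 + |zt a|) ^ (-1 + 2 * ε)) := by gcongr
    _ = _ := by ring

/-- A good configuration is bounded by the summand of `core` belonging to its mechanism. -/
lemma good_bound (hε : 0 < ε) (hε1 : ε ≤ 1 / 20) {a b c : R3} (h : a + b + c = 0)
    (hg : Good a b c) :
    lam a ^ (-(1 - ε)) * (lam b ^ (-(1 - ε)) * lam c ^ (-(1 - ε))) ≤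
      200 * ((kf ε (sg b) + kf ε (sg c)) * core ε |zt a| (min |zt b| |zt c|) |sg b + sg c|
        ((zt b * om b - zt c * om c) ^ 2)) := by
  obtain ⟨-, -, hg⟩ := hg
  set m := min |zt b| |zt c| with hmdef
  have hm : 0 ≤ m := le_min (abs_nonneg _) (abs_nonneg _)
  set D := (zt b * om b - zt c * om c) ^ 2 with hD
  set k := kf ε (sg b) + kf ε (sg c) with hk
  have hk0 : 0 ≤ k := add_nonneg (kf_nonneg _ _) (kf_nonneg _ _)
  set y := |zt a| with hy
  have hy0 : 0 ≤ y := abs_nonneg _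
  set S := |sg b + sg c| with hS
  have hS0 : 0 ≤ S := abs_nonneg _
  have hB := free_sum_le h
  have hla : 0 < lam a := by linarith [one_le_lam a]
  have hlb : 0 < lam b := by linarith [one_le_lam b]
  have hlc : 0 < lam c := by linarith [one_le_lam c]
  have q1 : 0 ≤ ((1 + y) ^ 2 + m * y ^ 2) ^ (-(1 / 2) : ℝ) * (1 + y) ^ (-1 + 2 * ε) *
      ((1 + y) ^ 2 + S) ^ (-(1 - 3 * ε)) := by positivity
  have q2 : 0 ≤ (1 + y) ^ (-2 + 2 * ε) *
      ((1 + y) ^ 2 + m * y ^ 2 + S) ^ (-(1 - 3 * ε)) := by positivity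
  have q3 : 0 ≤ (1 + y) ^ (-2 + 2 * ε) *
      (if m * y ^ 3 ≤ 200 * D then ((1 + y) ^ 2 + S) ^ (-(1 - 3 * ε)) else 0) := by
    split_ifs <;> positivity
  rcases hg with hg | hg | hg
  · calc _ ≤ 16 * (((1 + y) ^ 2 + m * y ^ 2) ^ (-(1 / 2) : ℝ) * (1 + y) ^ (-1 + 2 * ε)) *
          (2 * 4 * (((1 + y) ^ 2 + S) ^ (-(1 - 3 * ε)) * k)) := by
          gcongr ?_ * ?_
          · exact frozen_rpow_le' hε hε1 hm hg
          · exact pair_bound hε hε1 (by positivity) (by norm_num) hB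
      _ = 128 * (k * (((1 + y) ^ 2 + m * y ^ 2) ^ (-(1 / 2) : ℝ) * (1 + y) ^ (-1 + 2 * ε) *
          ((1 + y) ^ 2 + S) ^ (-(1 - 3 * ε)))) := by ring
      _ ≤ _ := by
          gcongr ?_ * (k * ?_)
          · norm_num
          · unfold core; linarith
  · calc _ ≤ 2 * (1 + y) ^ (-2 + 2 * ε) *
          (2 * 10 * (((1 + y) ^ 2 + m * y ^ 2 + S) ^ (-(1 - 3 * ε)) * k)) := by
          gcongr ?_ * ?_
          · exact frozen_rpow_le hε hε1 a
          · exact pair_bound hε hε1 (by positivity) (by norm_num) (by linarith)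
      _ = 40 * (k * ((1 + y) ^ (-2 + 2 * ε) *
          ((1 + y) ^ 2 + m * y ^ 2 + S) ^ (-(1 - 3 * ε)))) := by ring
      _ ≤ _ := by
          gcongr ?_ * (k * ?_)
          · norm_num
          · unfold core; linarith
  · calc _ ≤ 2 * (1 + y) ^ (-2 + 2 * ε) *
          (2 * 4 * (((1 + y) ^ 2 + S) ^ (-(1 - 3 * ε)) * k)) := by
          gcongr ?_ * ?_
          · exact frozen_rpow_le hε hε1 a
          · exact pair_bound hε hε1 (by positivity) (by norm_num) hB
      _ = 16 * (k * ((1 + y) ^ (-2 + 2 * ε) *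
          (if m * y ^ 3 ≤ 200 * D then ((1 + y) ^ 2 + S) ^ (-(1 - 3 * ε)) else 0))) := by
          rw [if_pos hg]; ring
      _ ≤ _ := by
          gcongr ?_ * (k * ?_)
          · norm_num
          · unfold core; linarith

/-- When the output modulation `σ_c` is at most `1`, the weight `|σ_c|^{-ε}` is absorbed by `kf`,
and the product `Λ_b Λ_c` alone controls the resonance. -/
lemma small_bound (hε : 0 < ε) (hε1 : ε ≤ 1 / 20) {a b c : R3} (h : a + b + c = 0)
    (hc1 : |sg c| ≤ 1) :
    lam a ^ (-(1 - ε)) * (lam b ^ (-(1 - ε)) * ((lam c)⁻¹ * |sg c| ^ (-ε))) ≤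
      200 * ((kf ε (sg b) + kf ε (sg c)) * core ε |zt a| (min |zt b| |zt c|) |sg b + sg c|
        ((zt b * om b - zt c * om c) ^ 2)) := by
  obtain ⟨hz, -, -⟩ := sum_zero_coords h
  have hmb : min |zt b| |zt c| ≤ |zt b| := min_le_left _ _
  have hmc : min |zt b| |zt c| ≤ |zt c| := min_le_right _ _
  have hm : 0 ≤ min |zt b| |zt c| := le_min (abs_nonneg _) (abs_nonneg _)
  set m := min |zt b| |zt c| with hmdef
  set D := (zt b * om b - zt c * om c) ^ 2 with hD
  set k := kf ε (sg b) + kf ε (sg c) with hk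
  have hk0 : 0 ≤ k := add_nonneg (kf_nonneg _ _) (kf_nonneg _ _)
  set y := |zt a| with hy
  have hy0 : 0 ≤ y := abs_nonneg _
  set S := |sg b + sg c| with hS
  have hS0 : 0 ≤ S := abs_nonneg _
  have hB := free_sum_le h
  have hla : 0 < lam a := by linarith [one_le_lam a]
  have lb := one_le_lam b
  have lc := one_le_lam c
  have hlb : 0 < lam b := by linarith
  have hlc : 0 < lam c := by linarith
  have q1 : 0 ≤ ((1 + y) ^ 2 + m * y ^ 2) ^ (-(1 / 2) : ℝ) * (1 + y) ^ (-1 + 2 * ε) *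
      ((1 + y) ^ 2 + S) ^ (-(1 - 3 * ε)) := by positivity
  have q3 : 0 ≤ (1 + y) ^ (-2 + 2 * ε) *
      (if m * y ^ 3 ≤ 200 * D then ((1 + y) ^ 2 + S) ^ (-(1 - 3 * ε)) else 0) := by
    split_ifs <;> positivity
  have hbl : zt b ^ 2 ≤ lam b := by unfold lam; linarith [abs_nonneg (sg b)]
  have hcl : zt c ^ 2 ≤ lam c := by unfold lam; linarith [abs_nonneg (sg c)]
  have hbl' : |zt b| ≤ lam b := by
    unfold lam; nlinarith [abs_nonneg (sg b), sq_nonneg (|zt b| - 1), sq_abs (zt b)]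
  have hcl' : |zt c| ≤ lam c := by
    unfold lam; nlinarith [abs_nonneg (sg c), sq_nonneg (|zt c| - 1), sq_abs (zt c)]
  have e : y ^ 2 ≤ 2 * zt b ^ 2 + 2 * zt c ^ 2 := by
    rw [hy, sq_abs, show zt a = -(zt b + zt c) by linarith]; nlinarith [sq_nonneg (zt b - zt c)]
  have hm2 : m * y ^ 2 ≤ 4 * (lam b * lam c) := by
    have t1 : m * zt b ^ 2 ≤ lam c * lam b := by
      have := hmc.trans hcl'
      gcongr
    have t2 : m * zt c ^ 2 ≤ lam b * lam c := by
      have := hmb.trans hbl'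
      gcongr
    nlinarith [mul_le_mul_of_nonneg_left e hm]
  have hsum : lam b + lam c ≤ 2 * (lam b * lam c) := by
    have t1 := mul_le_mul_of_nonneg_left lc hlb.le
    have t2 := mul_le_mul_of_nonneg_left lb hlc.le
    linarith
  have hA2 : (1 + y) ^ 2 + m * y ^ 2 + S ≤ 12 * (lam b * lam c) := by linarith
  have hpair : lam b ^ (-(1 - ε)) * (lam c)⁻¹ ≤
      12 * ((1 + y) ^ 2 + m * y ^ 2 + S) ^ (-(1 - 3 * ε)) := by
    have hA : 0 < (1 + y) ^ 2 + m * y ^ 2 + S := by positivity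
    calc _ ≤ lam b ^ (-(1 - 3 * ε)) * lam c ^ (-(1 - 3 * ε)) := by
          rw [← Real.rpow_neg_one (lam c)]
          gcongr ?_ * ?_
          · exact Real.rpow_le_rpow_of_exponent_le lb (by linarith)
          · exact Real.rpow_le_rpow_of_exponent_le lc (by linarith)
      _ = (lam b * lam c) ^ (-(1 - 3 * ε)) := (Real.mul_rpow hlb.le hlc.le).symm
      _ ≤ (((1 + y) ^ 2 + m * y ^ 2 + S) / 12) ^ (-(1 - 3 * ε)) :=
          Real.rpow_le_rpow_of_nonpos (by positivity) (by linarith) (by linarith)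
      _ = 12 ^ (1 - 3 * ε) * ((1 + y) ^ 2 + m * y ^ 2 + S) ^ (-(1 - 3 * ε)) := by
          rw [Real.div_rpow hA.le (by norm_num), Real.rpow_neg (by norm_num : (0 : ℝ) ≤ 12),
            div_inv_eq_mul, mul_comm]
      _ ≤ 12 ^ (1 : ℝ) * _ := by
          gcongr
          · norm_num
          · linarith
      _ = _ := by norm_num
  have hkc : |sg c| ^ (-ε) ≤ k := by
    have : |sg c| ^ (-ε) ≤ kf ε (sg c) := by
      unfold kf
      rw [if_pos hc1]
      exact le_add_of_nonneg_left (by positivity)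
    linarith [kf_nonneg ε (sg b)]
  calc _ = lam a ^ (-(1 - ε)) * (lam b ^ (-(1 - ε)) * (lam c)⁻¹ * |sg c| ^ (-ε)) := by ring
    _ ≤ 2 * (1 + y) ^ (-2 + 2 * ε) *
        (12 * ((1 + y) ^ 2 + m * y ^ 2 + S) ^ (-(1 - 3 * ε)) * k) := by
        gcongr ?_ * (?_ * ?_)
        exact frozen_rpow_le hε hε1 a
    _ = 24 * (k * ((1 + y) ^ (-2 + 2 * ε) *
        ((1 + y) ^ 2 + m * y ^ 2 + S) ^ (-(1 - 3 * ε)))) := by ring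
    _ ≤ _ := by
        gcongr ?_ * (k * ?_)
        · norm_num
        · unfold core; linarith

end Pair

lemma mul_one_add_rpow_mono {r x X : ℝ} (hr0 : 0 ≤ r) (hr1 : r ≤ 1) (hx : 0 ≤ x) (hX : x ≤ X) :
    x * (1 + x) ^ (-r) ≤ X * (1 + X) ^ (-r) := by
  have h1 : 0 < 1 + x := by linarith
  have h2 : 0 < 1 + X := by linarith
  have hu : 1 ≤ (1 + X) / (1 + x) := by rw [one_le_div h1]; linarith
  have e : (1 + x) ^ (-r) = ((1 + X) / (1 + x)) ^ r * (1 + X) ^ (-r) := by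
    rw [Real.div_rpow h2.le h1.le, Real.rpow_neg h1.le, Real.rpow_neg h2.le]
    have := Real.rpow_pos_of_pos h2 r
    field_simp
  rw [e, ← mul_assoc]
  gcongr
  calc x * ((1 + X) / (1 + x)) ^ r ≤ x * ((1 + X) / (1 + x)) ^ (1 : ℝ) := by
        gcongr
    _ ≤ X := by
        rw [Real.rpow_one, ← mul_div_assoc, div_le_iff₀ h1]
        nlinarith

/-- The Sobolev weights cost at most `y² (1 + y)^{2 max(-s, 0)}` when all frequencies are at most
`2 y`. -/
lemma weight_le {s : ℝ} (hs : -(1 / 2) < s) :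
    ∃ C : ℝ, 0 ≤ C ∧ ∀ z1 z2 z3 y : ℝ, z1 + z2 + z3 = 0 → |z1| ≤ 2 * y → |z2| ≤ 2 * y →
      |z3| ≤ 2 * y → z3 ^ 2 * (1 + z3 ^ 2) ^ s ≤
        C * (y ^ 2 * (1 + y) ^ (2 * max (-s) 0)) * ((1 + z1 ^ 2) ^ s * (1 + z2 ^ 2) ^ s) := by
  refine ⟨128 + 4 * 2 ^ s, by positivity, ?_⟩
  intro z1 z2 z3 y hz h1 h2 h3
  have hy : 0 ≤ y := by linarith [abs_nonneg z1]
  have sq_le : ∀ z : ℝ, |z| ≤ 2 * y → z ^ 2 ≤ 4 * y ^ 2 := fun z h => by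
    rw [← sq_abs]; nlinarith [abs_nonneg z]
  have H1 := sq_le z1 h1
  have H2 := sq_le z2 h2
  have H3 := sq_le z3 h3
  rcases le_total 0 s with hs0 | hs0
  · rw [max_eq_right (by linarith)]
    simp only [mul_zero, Real.rpow_zero, mul_one]
    calc z3 ^ 2 * (1 + z3 ^ 2) ^ s ≤
          4 * y ^ 2 * (2 * ((1 + z1 ^ 2) * (1 + z2 ^ 2))) ^ s := by
          gcongr
          rw [show z3 = -(z1 + z2) by linarith]
          nlinarith [sq_nonneg (z1 - z2), sq_nonneg (z1 * z2)]
      _ = 4 * 2 ^ s * y ^ 2 * ((1 + z1 ^ 2) ^ s * (1 + z2 ^ 2) ^ s) := by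
          rw [Real.mul_rpow (by norm_num) (by positivity),
            Real.mul_rpow (by positivity) (by positivity)]
          ring
      _ ≤ _ := by
          gcongr
          linarith
  · rw [max_eq_left (by linarith)]
    obtain ⟨r, rfl⟩ : ∃ r, s = -r := ⟨-s, by ring⟩
    rw [neg_neg]
    have hr0 : 0 ≤ r := by linarith
    have hY : 0 < 1 + y := by linarith
    have sqr : ∀ p : ℝ, ((1 + y) ^ 2) ^ p = (1 + y) ^ (2 * p) := fun p => by
      rw [← Real.rpow_natCast, ← Real.rpow_mul hY.le]; norm_num
    have low : ∀ z : ℝ, z ^ 2 ≤ 4 * y ^ 2 → 4⁻¹ * (1 + y) ^ (2 * -r) ≤ (1 + z ^ 2) ^ (-r) := by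
      intro z hzz
      calc 4⁻¹ * (1 + y) ^ (2 * -r) ≤ 4 ^ (-r) * (1 + y) ^ (2 * -r) := by
            gcongr
            rw [← Real.rpow_neg_one]
            exact Real.rpow_le_rpow_of_exponent_le (by norm_num) (by linarith)
        _ = (4 * (1 + y) ^ 2) ^ (-r) := by
            rw [Real.mul_rpow (by norm_num) (by positivity), sqr]
        _ ≤ _ := Real.rpow_le_rpow_of_nonpos (by positivity) (by nlinarith) (by linarith)
    have up : z3 ^ 2 * (1 + z3 ^ 2) ^ (-r) ≤ 8 * (y ^ 2 * (1 + y) ^ (2 * -r)) := by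
      calc z3 ^ 2 * (1 + z3 ^ 2) ^ (-r) ≤ 4 * y ^ 2 * (1 + 4 * y ^ 2) ^ (-r) :=
            mul_one_add_rpow_mono hr0 (by linarith) (sq_nonneg _) H3
        _ ≤ 4 * y ^ 2 * ((1 + y) ^ 2 / 2) ^ (-r) := by
            gcongr 4 * y ^ 2 * ?_
            exact Real.rpow_le_rpow_of_nonpos (by positivity)
              (by nlinarith [sq_nonneg (1 - y)]) (by linarith)
        _ = 4 * y ^ 2 * (2 ^ r * (1 + y) ^ (2 * -r)) := by
            rw [Real.div_rpow (by positivity) (by norm_num), sqr,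
              Real.rpow_neg (by norm_num : (0 : ℝ) ≤ 2), div_inv_eq_mul, mul_comm (2 ^ r)]
        _ ≤ 4 * y ^ 2 * (2 * (1 + y) ^ (2 * -r)) := by
            gcongr
            exact two_rpow_le_two (by linarith)
        _ = _ := by ring
    refine up.trans ?_
    calc 8 * (y ^ 2 * (1 + y) ^ (2 * -r))
        = 128 * (y ^ 2 * (1 + y) ^ (2 * r)) *
          ((4⁻¹ * (1 + y) ^ (2 * -r)) * (4⁻¹ * (1 + y) ^ (2 * -r))) := by
          have : (1 + y) ^ (2 * r) * (1 + y) ^ (2 * -r) = 1 := by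
            rw [← Real.rpow_add hY]; simp
          linear_combination (-8 * y ^ 2 * (1 + y) ^ (2 * -r)) * this
      _ ≤ _ := by
          have q := low z1 H1
          have q' := low z2 H2
          have t : (128 : ℝ) ≤ 128 + 4 * 2 ^ (-r) := by
            have : (0 : ℝ) ≤ 2 ^ (-r) := by positivity
            linarith
          gcongr

/-- The majorant in symmetric form, as a function of `a + b + c = 0`. -/
def Mj (ε r : ℝ) (a b c : R3) : ℝ :=
  (kf ε (sg b) + kf ε (sg c)) * majF ε r |zt a| (zt b) (zt c) (sg b + sg c)
    ((zt b * om b - zt c * om c) ^ 2)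

lemma Mj_nonneg (ε r : ℝ) (a b c : R3) : 0 ≤ Mj ε r a b c :=
  mul_nonneg (add_nonneg (kf_nonneg _ _) (kf_nonneg _ _)) (majF_nonneg (abs_nonneg _))

lemma win_pos (s ε : ℝ) (v : R3) : 0 < win s ε v := by
  have := one_le_lam v
  unfold win
  positivity

lemma wout_nonneg (s ε : ℝ) (v : R3) : 0 ≤ wout s ε v := by
  have := one_le_lam v
  unfold wout
  positivity

lemma kernel_aux {s ε C : ℝ} (hC : 0 ≤ C) {v1 v2 v3 a b c : R3}
    (hb : |zt b| ≤ 2 * |zt a|) (hc : |zt c| ≤ 2 * |zt a|)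
    (hw : zt v3 ^ 2 * (1 + zt v3 ^ 2) ^ s ≤
      C * (|zt a| ^ 2 * (1 + |zt a|) ^ (2 * max (-s) 0)) *
        ((1 + zt v1 ^ 2) ^ s * (1 + zt v2 ^ 2) ^ s))
    (hX : (lam v3)⁻¹ * (|sg v3| ^ (-ε) + |sg v3| ^ ε) *
        (lam v1 ^ (-(1 - ε)) * lam v2 ^ (-(1 - ε))) ≤
      400 * ((kf ε (sg b) + kf ε (sg c)) * core ε |zt a| (min |zt b| |zt c|) |sg b + sg c|
        ((zt b * om b - zt c * om c) ^ 2))) :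
    zt v3 ^ 2 * wout s ε v3 ≤ C * 400 * Mj ε (max (-s) 0) a b c * (win s ε v1 * win s ε v2) := by
  have l1 : 0 < lam v1 := by linarith [one_le_lam v1]
  have l2 : 0 < lam v2 := by linarith [one_le_lam v2]
  have l3 : 0 < lam v3 := by linarith [one_le_lam v3]
  have c1 : lam v1 ^ (-(1 - ε)) * lam v1 ^ (1 - ε) = 1 := by
    rw [← Real.rpow_add l1]; simp
  have c2 : lam v2 ^ (-(1 - ε)) * lam v2 ^ (1 - ε) = 1 := by
    rw [← Real.rpow_add l2]; simp
  unfold wout win Mj majF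
  rw [if_pos ⟨hb, hc⟩]
  generalize (kf ε (sg b) + kf ε (sg c)) = k at *
  generalize core ε |zt a| (min |zt b| |zt c|) |sg b + sg c|
    ((zt b * om b - zt c * om c) ^ 2) = co at *
  have hq : 0 ≤ lam v1 ^ (1 - ε) * lam v2 ^ (1 - ε) := by positivity
  calc _ = (zt v3 ^ 2 * (1 + zt v3 ^ 2) ^ s) * (((lam v3)⁻¹ * (|sg v3| ^ (-ε) + |sg v3| ^ ε) *
        (lam v1 ^ (-(1 - ε)) * lam v2 ^ (-(1 - ε)))) *
          (lam v1 ^ (1 - ε) * lam v2 ^ (1 - ε))) := by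
        linear_combination (-(zt v3 ^ 2 * (1 + zt v3 ^ 2) ^ s) *
          ((lam v3)⁻¹ * (|sg v3| ^ (-ε) + |sg v3| ^ ε))) *
            (c1 * (lam v2 ^ (-(1 - ε)) * lam v2 ^ (1 - ε)) + c2)
    _ ≤ (C * (|zt a| ^ 2 * (1 + |zt a|) ^ (2 * max (-s) 0)) *
        ((1 + zt v1 ^ 2) ^ s * (1 + zt v2 ^ 2) ^ s)) * ((400 * (k * co)) *
          (lam v1 ^ (1 - ε) * lam v2 ^ (1 - ε))) := by
        gcongr
    _ = _ := by ring

/-- The squared kernel of the bilinear form, after division by the weights of the two factors, is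
bounded by the three majorants. -/
lemma kernel_le {s ε : ℝ} (hs : -(1 / 2) < s) (hε : 0 < ε) (hε1 : ε ≤ 1 / 20) :
    ∃ C : ℝ, 0 ≤ C ∧ ∀ v1 v2 v3 : R3, v1 + v2 + v3 = 0 →
      zt v3 ^ 2 * wout s ε v3 ≤ C * (Mj ε (max (-s) 0) v3 v1 v2 + Mj ε (max (-s) 0) v1 v3 v2 +
        Mj ε (max (-s) 0) v2 v3 v1) * (win s ε v1 * win s ε v2) := by
  obtain ⟨C, hC, hw⟩ := weight_le hs
  refine ⟨C * 400, by positivity, ?_⟩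
  intro v1 v2 v3 h
  obtain ⟨hz, -, -⟩ := sum_zero_coords h
  have n1 := Mj_nonneg ε (max (-s) 0) v3 v1 v2
  have n2 := Mj_nonneg ε (max (-s) 0) v1 v3 v2
  have n3 := Mj_nonneg ε (max (-s) 0) v2 v3 v1
  have p1 := win_pos s ε v1
  have p2 := win_pos s ε v2
  have l1 : 0 < lam v1 := by linarith [one_le_lam v1]
  have l2 : 0 < lam v2 := by linarith [one_le_lam v2]
  have l3 : 0 < lam v3 := by linarith [one_le_lam v3]
  have h132 : v1 + v3 + v2 = 0 := by rw [← h]; abel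
  have h231 : v2 + v3 + v1 = 0 := by rw [← h]; abel
  have h213 : v2 + v1 + v3 = 0 := by rw [← h]; abel
  have h312 : v3 + v1 + v2 = 0 := by rw [← h]; abel
  -- it suffices to bound by one of the three majorants
  have red : ∀ x, (x = Mj ε (max (-s) 0) v3 v1 v2 ∨ x = Mj ε (max (-s) 0) v1 v3 v2 ∨
      x = Mj ε (max (-s) 0) v2 v3 v1) →
      zt v3 ^ 2 * wout s ε v3 ≤ C * 400 * x * (win s ε v1 * win s ε v2) →
      zt v3 ^ 2 * wout s ε v3 ≤ C * 400 * (Mj ε (max (-s) 0) v3 v1 v2 +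
        Mj ε (max (-s) 0) v1 v3 v2 + Mj ε (max (-s) 0) v2 v3 v1) * (win s ε v1 * win s ε v2) := by
    intro x hx hle
    refine hle.trans ?_
    gcongr
    rcases hx with rfl | rfl | rfl <;> linarith
  have w3 : |zt v3| ≤ |zt v1| + |zt v2| := by
    rw [show zt v3 = -(zt v1 + zt v2) by linarith, abs_neg]; exact abs_add_le _ _
  have a1 := abs_nonneg (zt v1)
  have a2 := abs_nonneg (zt v2)
  have a3 := abs_nonneg (zt v3)
  rcases le_or_gt 1 |sg v3| with hσ | hσ
  · have hX : (lam v3)⁻¹ * (|sg v3| ^ (-ε) + |sg v3| ^ ε) *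
        (lam v1 ^ (-(1 - ε)) * lam v2 ^ (-(1 - ε))) ≤
        2 * (lam v3 ^ (-(1 - ε)) * (lam v1 ^ (-(1 - ε)) * lam v2 ^ (-(1 - ε)))) := by
      have e1 : |sg v3| ^ (-ε) ≤ lam v3 ^ ε :=
        (Real.rpow_le_one_of_one_le_of_nonpos hσ (by linarith)).trans
          (Real.one_le_rpow (one_le_lam _) hε.le)
      have e2 : |sg v3| ^ ε ≤ lam v3 ^ ε := by
        gcongr
        exact abs_sg_le_lam v3
      have e3 : (lam v3)⁻¹ * lam v3 ^ ε = lam v3 ^ (-(1 - ε)) := by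
        rw [← Real.rpow_neg_one, ← Real.rpow_add l3]; congr 1; ring
      calc _ ≤ (lam v3)⁻¹ * (lam v3 ^ ε + lam v3 ^ ε) *
            (lam v1 ^ (-(1 - ε)) * lam v2 ^ (-(1 - ε))) := by gcongr
        _ = 2 * (((lam v3)⁻¹ * lam v3 ^ ε) * (lam v1 ^ (-(1 - ε)) * lam v2 ^ (-(1 - ε)))) := by
            ring
        _ = _ := by rw [e3]
    rcases cover h with g | g | g
    · refine red _ (Or.inr (Or.inl rfl)) (kernel_aux hC g.2.1 g.1
        (hw _ _ _ _ hz (by linarith) g.1 g.2.1) (hX.trans ?_))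
      have := good_bound hε hε1 h132 g.symm
      linarith
    · refine red _ (Or.inr (Or.inr rfl)) (kernel_aux hC g.1 g.2.1
        (hw _ _ _ _ hz g.2.1 (by linarith) g.1) (hX.trans ?_))
      have := good_bound hε hε1 h231 g
      linarith
    · refine red _ (Or.inl rfl) (kernel_aux hC g.1 g.2.1
        (hw _ _ _ _ hz g.1 g.2.1 (by linarith)) (hX.trans ?_))
      have := good_bound hε hε1 h312 g
      linarith
  · rcases eq_or_ne (sg v3) 0 with h0 | h0
    · have : wout s ε v3 = 0 := by
        unfold wout
        rw [h0, abs_zero, Real.zero_rpow hε.ne', Real.zero_rpow (by linarith)]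
        ring
      rw [this, mul_zero]
      positivity
    have hp : 0 < |sg v3| := abs_pos.2 h0
    have hX : (lam v3)⁻¹ * (|sg v3| ^ (-ε) + |sg v3| ^ ε) *
        (lam v1 ^ (-(1 - ε)) * lam v2 ^ (-(1 - ε))) ≤
        2 * (lam v1 ^ (-(1 - ε)) * (lam v2 ^ (-(1 - ε)) * ((lam v3)⁻¹ * |sg v3| ^ (-ε)))) := by
      have e1 : |sg v3| ^ ε ≤ |sg v3| ^ (-ε) :=
        Real.rpow_le_rpow_of_exponent_ge hp hσ.le (by linarith)
      calc _ ≤ (lam v3)⁻¹ * (|sg v3| ^ (-ε) + |sg v3| ^ (-ε)) *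
            (lam v1 ^ (-(1 - ε)) * lam v2 ^ (-(1 - ε))) := by gcongr
        _ = _ := by ring
    have flip : ∀ a b c : R3, Mj ε (max (-s) 0) a b c = Mj ε (max (-s) 0) a c b := by
      intro a b c
      unfold Mj majF
      rw [add_comm (kf ε (sg c)), add_comm (sg c), min_comm |zt c|,
        show (zt c * om c - zt b * om b) ^ 2 = (zt b * om b - zt c * om c) ^ 2 by ring]
      by_cases h1 : |zt b| ≤ 2 * |zt a| <;> by_cases h2 : |zt c| ≤ 2 * |zt a| <;> simp [h1, h2]
    rcases le_total |zt v2| |zt v1| with h12 | h12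
    · refine red _ (Or.inr (Or.inl (flip v1 v2 v3))) (kernel_aux hC (by linarith) (by linarith)
        (hw _ _ _ _ hz (by linarith) (by linarith) (by linarith)) (hX.trans ?_))
      have := small_bound hε hε1 h hσ.le
      linarith
    · refine red _ (Or.inr (Or.inr (flip v2 v1 v3))) (kernel_aux hC (by linarith) (by linarith)
        (hw _ _ _ _ hz (by linarith) (by linarith) (by linarith)) (hX.trans ?_))
      have := small_bound hε hε1 h213 hσ.le
      rw [mul_left_comm] at this
      linarith

/-! ### The bilinear estimate -/

lemma zt_neg (v : R3) : zt (-v) = -zt v := by simp [zt]; ring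

lemma wout_neg (s ε : ℝ) (v : R3) : wout s ε (-v) = wout s ε v := by
  have hσ : sg (-v) = -sg v := by simp [sg]; ring
  simp [wout, lam, zt_neg, hσ]

/-- The squared kernel of the bilinear form, after division by the weights of the two factors. -/
def kerSq (s ε : ℝ) (v w : R3) : ℝ :=
  zt v ^ 2 * wout s ε v / (win s ε w * win s ε (v - w))

lemma kerSq_nonneg (s ε : ℝ) (v w : R3) : 0 ≤ kerSq s ε v w :=
  div_nonneg (mul_nonneg (sq_nonneg _) (wout_nonneg _ _ _))
    (mul_nonneg (win_pos _ _ _).le (win_pos _ _ _).le)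

lemma ofReal_sqrt_sq {x : ℝ} (hx : 0 ≤ x) : ENNReal.ofReal √x ^ 2 = ENNReal.ofReal x := by
  rw [← ENNReal.ofReal_pow (Real.sqrt_nonneg _), Real.sq_sqrt hx]

lemma win_measurable (s ε : ℝ) : Measurable (win s ε) := by
  have := zt_continuous.measurable
  have := lam_continuous.measurable
  unfold win
  fun_prop

/-- The weighted `L²` form of the bilinear estimate, for any `H` dominated by `|ζ|` times the
convolution of `F` and `G`. -/
lemma weighted_bilinear {s ε : ℝ} (hs : -(1 / 2) < s) (hε : 0 < ε) (hε1 : ε ≤ 1 / 20)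
    (hr : 2 * max (-s) 0 - 2 + 14 * ε ≤ -1) :
    ∃ C : ℝ≥0∞, C ≠ ⊤ ∧ ∀ F G H : R3 → ℝ≥0∞, Measurable F → Measurable G →
      (∀ v, H v ≤ ENNReal.ofReal |zt v| * ∫⁻ w, F w * G (v - w)) →
      ∫⁻ v, ENNReal.ofReal (wout s ε v) * H v ^ 2 ≤
        C * ((∫⁻ v, ENNReal.ofReal (win s ε v) * F v ^ 2) *
          ∫⁻ v, ENNReal.ofReal (win s ε v) * G v ^ 2) := by
  obtain ⟨C, hC, hker⟩ := kernel_le hs hε hε1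
  obtain ⟨C', hC', hint⟩ := maj_lintegral hε hε1 hr
  refine ⟨9 * (ENNReal.ofReal C * C'), ENNReal.mul_ne_top (by simp)
    (ENNReal.mul_ne_top ENNReal.ofReal_ne_top hC'), ?_⟩
  intro F G H hF hG hH
  set r := max (-s) 0
  have hmeas : Measurable fun v => ENNReal.ofReal √(win s ε v) :=
    (win_measurable s ε).sqrt.ennreal_ofReal
  have main := schur_main (fun w => ENNReal.ofReal √(win s ε w) * F w)
    (fun w => ENNReal.ofReal √(win s ε w) * G w) (hmeas.mul hF) (hmeas.mul hG)
    (fun a b => ENNReal.ofReal C * ENNReal.ofReal (maj ε r a b))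
    ((maj_measurable ε r).ennreal_ofReal.const_mul _) (ENNReal.ofReal C * C') ?_
    (fun v w => ENNReal.ofReal √(kerSq s ε v w)) ?_
  · simp only [mul_pow, ofReal_sqrt_sq (win_pos s ε _).le] at main
    refine le_trans (lintegral_mono fun v => ?_) main
    rw [← ofReal_sqrt_sq (wout_nonneg s ε v), ← mul_pow]
    refine pow_le_pow_left' ?_ 2
    calc ENNReal.ofReal √(wout s ε v) * H v
        ≤ ENNReal.ofReal √(wout s ε v) *
          (ENNReal.ofReal |zt v| * ∫⁻ w, F w * G (v - w)) := by gcongr; exact hH v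
      _ = ∫⁻ w, ENNReal.ofReal √(wout s ε v) * ENNReal.ofReal |zt v| * (F w * G (v - w)) := by
          rw [← mul_assoc, lintegral_const_mul]
          exact hF.mul (hG.comp (measurable_const.sub measurable_id))
      _ = _ := by
          refine lintegral_congr fun w => ?_
          have p := win_pos s ε w
          have q := win_pos s ε (v - w)
          have e : √(wout s ε v) * |zt v| =
              √(kerSq s ε v w) * (√(win s ε w) * √(win s ε (v - w))) := by
            rw [← Real.sqrt_mul p.le, ← Real.sqrt_mul (kerSq_nonneg _ _ _ _), kerSq,
              div_mul_cancel₀ _ (mul_pos p q).ne', Real.sqrt_mul (sq_nonneg _),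
              Real.sqrt_sq_eq_abs, mul_comm]
          rw [← ENNReal.ofReal_mul (Real.sqrt_nonneg _), e,
            ENNReal.ofReal_mul (Real.sqrt_nonneg _), ENNReal.ofReal_mul (Real.sqrt_nonneg _)]
          ring
  · intro a
    rw [lintegral_const_mul]
    · gcongr
      exact hint a
    · exact ((maj_measurable ε r).comp measurable_prodMk_left).ennreal_ofReal
  · intro v w
    have p := win_pos s ε w
    have q := win_pos s ε (v - w)
    have h := hker w (v - w) (-v) (by abel)
    have e1 : Mj ε r (-v) w (v - w) = maj ε r (-v) w := by
      rw [show v - w = -(-v) - w by abel]; rfl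
    have e2 : Mj ε r w (-v) (v - w) = maj ε r w (-v) := by
      rw [show v - w = -w - -v by abel]; rfl
    have e3 : Mj ε r (v - w) (-v) w = maj ε r (v - w) (-v) := by
      conv_lhs => rw [show Mj ε r (v - w) (-v) w = Mj ε r (v - w) (-v) (-(v - w) - -v) by
        congr 1; abel]
      rfl
    rw [e1, e2, e3, zt_neg, neg_sq, wout_neg] at h
    have n1 := maj_nonneg ε r (-v) w
    have n2 := maj_nonneg ε r w (-v)
    have n3 := maj_nonneg ε r (v - w) (-v)
    simp only [ofReal_sqrt_sq (kerSq_nonneg s ε v w)]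
    rw [← mul_add, ← mul_add, ← ENNReal.ofReal_add n1 n2, ← ENNReal.ofReal_add (by positivity) n3,
      ← ENNReal.ofReal_mul hC]
    refine ENNReal.ofReal_le_ofReal ?_
    rw [kerSq, div_le_iff₀ (mul_pos p q)]
    exact h

/-- The key bilinear estimate: for `s > -1/2` there exist `δ ∈ (0,1)` and `C > 0`
such that `‖(∂_x+∂_y)(uv)‖_{X̃^{s,-1/2,1}} ≤ C ‖u‖_{X̃^{s,(1-δ)/2,1}} ‖v‖_{X̃^{s,(1-δ)/2,1}}`
for all Schwartz functions `u, v`. -/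
theorem bilinear_estimate_anisotropic (s : ℝ) (hs : -(1 / 2) < s)
    (χ : ℝ → ℝ) (hχ_smooth : ContDiff ℝ (⊤ : ℕ∞) χ) (hχ_even : ∀ t, χ (-t) = χ t)
    (hχ_nonneg : ∀ t, 0 ≤ χ t) (hχ_le_one : ∀ t, χ t ≤ 1)
    (hχ_supp : Function.support χ ⊆ Set.Ioo (-2) 2)
    (hχ_one : ∀ t ∈ Set.Icc (-1 : ℝ) 1, χ t = 1) :
    ∃ δ C : ℝ, δ ∈ Set.Ioo (0 : ℝ) 1 ∧ 0 < C ∧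
      ∀ u v : SchwartzMap (ℝ × ℝ × ℝ) ℂ,
        Xtnorm χ s (-(1 / 2))
            (dxdyProd (fun t x y => u (t, x, y)) (fun t x y => v (t, x, y))) ≤
          ENNReal.ofReal C *
            (Xtnorm χ s ((1 - δ) / 2) (fun t x y => u (t, x, y)) *
              Xtnorm χ s ((1 - δ) / 2) (fun t x y => v (t, x, y))) := by
  have hcut : CutOff χ := ⟨hχ_nonneg, hχ_le_one, hχ_supp, hχ_one⟩
  have hχ : Continuous χ := hχ_smooth.continuous
  have hr0 : max (-s) 0 < 1 / 2 := max_lt (by linarith) (by norm_num)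
  have hr1 : 0 ≤ max (-s) 0 := le_max_right _ _
  -- `ε = 0` is admissible with room `1 - 2 max (-s) 0` in the exponents; spend part of it
  obtain ⟨ε, hε⟩ : ∃ ε, ε = (1 - 2 * max (-s) 0) / 20 := ⟨_, rfl⟩
  have hε0 : 0 < ε := by linarith
  have hε1 : ε ≤ 1 / 20 := by linarith
  obtain ⟨A, hA, hout⟩ := Xtnorm_out_le hcut hχ s hε0 (by linarith)
  obtain ⟨B, hB, hin⟩ := le_Xtnorm_in hcut hχ s ε
  obtain ⟨D, hD, hbil⟩ := weighted_bilinear hs hε0 hε1 (by linarith)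
  have hK : A * (D * (B * B)) ≠ ⊤ :=
    ENNReal.mul_ne_top hA (ENNReal.mul_ne_top hD (ENNReal.mul_ne_top hB hB))
  have hK2 : (A * (D * (B * B))) ^ (1 / 2 : ℝ) ≠ ⊤ := ENNReal.rpow_ne_top_of_nonneg (by norm_num) hK
  refine ⟨ε, ((A * (D * (B * B))) ^ (1 / 2 : ℝ)).toReal + 1, ⟨hε0, by linarith⟩,
    by positivity, ?_⟩
  intro u v
  have key : Xtnorm χ s (-(1 / 2)) (dxdyProd (fun t x y => u (t, x, y)) fun t x y => v (t, x, y)) ^ 2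
      ≤ A * (D * (B * B)) * (Xtnorm χ s ((1 - ε) / 2) (fun t x y => u (t, x, y)) *
        Xtnorm χ s ((1 - ε) / 2) fun t x y => v (t, x, y)) ^ 2 := by
    rw [dxdyProd_eq]
    refine (hout _ (ftt_continuous _)).trans ?_
    refine (mul_le_mul_right (hbil _ _ _ (ftt_continuous u).enorm.measurable
      (ftt_continuous v).enorm.measurable (ftt_derivProd_le u v)) A).trans ?_
    calc _ ≤ A * (D * ((B * Xtnorm χ s ((1 - ε) / 2) (fun t x y => u (t, x, y)) ^ 2) *
          (B * Xtnorm χ s ((1 - ε) / 2) (fun t x y => v (t, x, y)) ^ 2))) := by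
          gcongr
          · exact hin _ (ftt_continuous u)
          · exact hin _ (ftt_continuous v)
      _ = _ := by ring
  have root := ENNReal.rpow_le_rpow key (by norm_num : (0 : ℝ) ≤ 1 / 2)
  rw [ENNReal.mul_rpow_of_nonneg _ _ (by norm_num), sq_sqrt_enn, sq_sqrt_enn] at root
  refine root.trans ?_
  gcongr
  rw [← ENNReal.ofReal_toReal hK2]
  exact ENNReal.ofReal_le_ofReal (by rw [ENNReal.ofReal_toReal hK2]; linarith)
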